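/- arXiv:2505.11273 — 10 statements merged into one kernel-verified Lean document; each statement's English description precedes it below -/
import Mathlib

section
/- Adding the valid inequalities (q_p + d_p − a_p^⊤x)/‖b_p‖_* ≥ s does not change the x-feasible region of the exact reformulation: X_Exact = {x ∈ X : ∃ s ∈ ℝ, r ∈ ℝ^N with s ≥ 0, r_i ≥ 0 for all i, εNs − Σ_{i∈[N]} r_i ≥ θN, (f_{i,p}(x))^+ ≥ s − r_i for all i ∈ [N], p ∈ [P], and (q_p + d_p − a_p^⊤x)/‖b_p‖_* ≥ s for all p ∈ [P]}. -/
/-!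
Lowering the level `s` to `t ≥ 0` while lowering every slack `rᵢ` to `max (rᵢ - (s - t)) 0` keeps
all covering constraints. It loses `εN (s - t)` in the budget constraint and regains at least
`s - t` for every sample with `rᵢ ≥ s - t`, in particular for every sample with
`max (f i p) 0 ≤ t`. When `t = max (g p) 0`, with `g p` the normalized `(k + 1)`-st order
statistic, there are at least `k + 1 > εN` such samples, so the budget constraint survives.
Because `θ > 0`, every feasible level is positive, so `t ≤ max (g p) 0` forces `t ≤ g p`; choosing
`p` to minimize `g` gives all the valid inequalities at once.
-/

open Finset

lemma sum_max_sub_add_card_nsmul_le_sum {ι M : Type*} [AddCommGroup M] [LinearOrder M]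
    [IsOrderedAddMonoid M] {S J : Finset ι} {r : ι → M} {u : M} (hJS : J ⊆ S) (hu : 0 ≤ u)
    (hr : ∀ i ∈ S, 0 ≤ r i) (hJ : ∀ i ∈ J, u ≤ r i) :
    ∑ i ∈ S, max (r i - u) 0 + #J • u ≤ ∑ i ∈ S, r i := by
  classical
  have off_J : ∑ i ∈ S \ J, max (r i - u) 0 ≤ ∑ i ∈ S \ J, r i :=
    sum_le_sum fun i hi => max_le (sub_le_self _ hu) (hr i (mem_sdiff.1 hi).1)
  have on_J : ∑ i ∈ J, max (r i - u) 0 + #J • u = ∑ i ∈ J, r i := by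
    rw [← sum_const, ← sum_add_distrib]
    exact sum_congr rfl fun i hi => by rw [max_eq_left (sub_nonneg.2 (hJ i hi)), sub_add_cancel]
  rw [← sum_sdiff hJS, ← sum_sdiff hJS, add_assoc, on_J]
  gcongr

lemma lt_card_le_sort_apply {α : Type*} [LinearOrder α] {n : ℕ} (v : Fin n → α) (k : Fin n) :
    (k : ℕ) < #{i | v i ≤ v (Tuple.sort v k)} := by
  have hcard : #{i | (v ∘ Tuple.sort v) i ≤ v (Tuple.sort v k)} =
      #{i | v i ≤ v (Tuple.sort v k)} :=
    card_equiv (Tuple.sort v) fun i => by simp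
  rw [← hcard]
  exact (Tuple.lt_card_le_iff_apply_le_of_monotone (Tuple.monotone_sort v)).2 le_rfl

section Feasibility

variable {ι κ : Type*} [Fintype ι] {m δ : ℝ} {f : ι → κ → ℝ} {s t : ℝ} {r : ι → ℝ}

/-- `IsFeasible m δ f s r` says that the level `s` and the slacks `r` satisfy the constraints of
the exact reformulation at a decision where the normalized safety margin of sample `i` in
constraint `p` is `f i p`. The parameters `m` and `δ` stand for `εN` and `θN`. -/
def IsFeasible (m δ : ℝ) (f : ι → κ → ℝ) (s : ℝ) (r : ι → ℝ) : Prop :=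
  0 ≤ s ∧ (∀ i, 0 ≤ r i) ∧ m * s - ∑ i, r i ≥ δ ∧ ∀ i p, max (f i p) 0 ≥ s - r i

namespace IsFeasible

lemma level_pos (hδ : 0 < δ) (h : IsFeasible m δ f s r) : 0 < s := by
  obtain ⟨hs, hr, hbudget, -⟩ := h
  have hsum : 0 ≤ ∑ i, r i := sum_nonneg fun i _ => hr i
  have hms : m * s ≠ 0 := by linarith
  exact hs.lt_of_ne' (right_ne_zero_of_mul hms)

lemma truncate {p : κ} (h : IsFeasible m δ f s r) (ht : 0 ≤ t) (hts : t ≤ s)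
    (hm : m ≤ #{i | max (f i p) 0 ≤ t}) :
    IsFeasible m δ f t fun i => max (r i - (s - t)) 0 := by
  obtain ⟨-, hr, hbudget, hcover⟩ := h
  refine ⟨ht, fun i => le_max_right _ _, ?_, fun i p' => ?_⟩
  · have hslack : ∑ i, max (r i - (s - t)) 0 + #{i | max (f i p) 0 ≤ t} • (s - t) ≤ ∑ i, r i := by
      refine sum_max_sub_add_card_nsmul_le_sum (subset_univ _) (sub_nonneg.2 hts)
        (fun i _ => hr i) fun i hi => ?_
      linarith [hcover i p, (mem_filter.1 hi).2]
    have hloss : m * (s - t) ≤ #{i | max (f i p) 0 ≤ t} * (s - t) :=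
      mul_le_mul_of_nonneg_right hm (sub_nonneg.2 hts)
    rw [nsmul_eq_mul] at hslack
    linarith
  · linarith [hcover i p', le_max_left (r i - (s - t)) 0]

lemma exists_level_le_max {p : κ} {c : ℝ} (h : IsFeasible m δ f s r)
    (hm : m ≤ #{i | f i p ≤ c}) : ∃ t r', IsFeasible m δ f t r' ∧ t ≤ max c 0 := by
  rcases le_total s (max c 0) with hs | hs
  · exact ⟨s, r, h, hs⟩
  · refine ⟨_, _, h.truncate (p := p) (le_max_right c 0) hs (hm.trans ?_), le_rfl⟩
    exact_mod_cast card_le_card <| monotone_filter_right _ fun i _ hi => max_le_max_right 0 hi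

lemma exists_level_le [Finite κ] {g : κ → ℝ} (hδ : 0 < δ) (h : IsFeasible m δ f s r)
    (hg : ∀ p, m ≤ #{i | f i p ≤ g p}) : ∃ t r', IsFeasible m δ f t r' ∧ ∀ p, t ≤ g p := by
  cases isEmpty_or_nonempty κ
  · exact ⟨s, r, h, isEmptyElim⟩
  obtain ⟨p, hp⟩ := Finite.exists_min g
  obtain ⟨t, r', ht, htp⟩ := h.exists_level_le_max (hg p)
  have htg : t ≤ g p := (le_max_iff.1 htp).resolve_right (ht.level_pos hδ).not_ge
  exact ⟨t, r', ht, fun p' => htg.trans (hp p')⟩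

end IsFeasible

/-- `g p x` plays the role of `(q_p + d_p - a_pᵀ x) / ‖b_p‖_*`. -/
theorem stmt_0_general {α : Type*} [Finite κ] (hδ : 0 < δ) (X : Set α) (f : ι → κ → α → ℝ)
    (g : κ → α → ℝ) (hg : ∀ x ∈ X, ∀ p, m ≤ #{i | f i p x ≤ g p x}) :
    {x | x ∈ X ∧ ∃ s r, IsFeasible m δ (f · · x) s r} =
      {x | x ∈ X ∧ ∃ s r, IsFeasible m δ (f · · x) s r ∧ ∀ p, g p x ≥ s} := by
  refine Set.ext fun x => and_congr_right fun hx => ⟨?_, ?_⟩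
  · rintro ⟨s, r, h⟩
    exact h.exists_level_le hδ (hg x hx)
  · rintro ⟨s, r, h, -⟩
    exact ⟨s, r, h⟩

end Feasibility

theorem stmt_0
    (N K L P : ℕ) (hN : 0 < N) (hK : 0 < K) (hL : 0 < L) (hP : 0 < P)
    (nrm : (Fin K → ℝ) → ℝ)
    (nrm_eq_zero : ∀ u : Fin K → ℝ, nrm u = 0 ↔ u = 0)
    (nrm_smul : ∀ (c : ℝ) (u : Fin K → ℝ), nrm (c • u) = |c| * nrm u)
    (nrm_triangle : ∀ u w : Fin K → ℝ, nrm (u + w) ≤ nrm u + nrm w)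
    (dstar : (Fin K → ℝ) → ℝ)
    (hdstar : ∀ v : Fin K → ℝ,
      dstar v = sSup ((fun u : Fin K → ℝ => ∑ j, v j * u j) '' {u | nrm u ≤ 1}))
    (ξ : Fin N → Fin K → ℝ)
    (a : Fin P → Fin L → ℝ) (b : Fin P → Fin K → ℝ) (hb : ∀ p, b p ≠ 0)
    (d : Fin P → ℝ)
    (ε θ : ℝ) (hε0 : 0 < ε) (hε1 : ε < 1) (hθ : 0 < θ)
    (k : ℕ) (hk : k = ⌊ε * (N : ℝ)⌋₊) (hkN : k < N)
    (X : Set (Fin L → ℝ))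
    (f : Fin N → Fin P → (Fin L → ℝ) → ℝ)
    (hf : ∀ i p x, f i p x =
      ((∑ j, b p j * ξ i j) + d p - ∑ j, a p j * x j) / dstar (b p))
    (q : Fin P → ℝ)
    (hq : ∀ p, q p =
      ((fun i => ∑ j, b p j * ξ i j) ∘ Tuple.sort (fun i => ∑ j, b p j * ξ i j)) ⟨k, hkN⟩)
    (XExact : Set (Fin L → ℝ))
    (hXExact : XExact = {x | x ∈ X ∧ ∃ s : ℝ, ∃ r : Fin N → ℝ,
      0 ≤ s ∧ (∀ i, 0 ≤ r i) ∧
      ε * (N : ℝ) * s - ∑ i, r i ≥ θ * (N : ℝ) ∧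
      ∀ i p, max (f i p x) 0 ≥ s - r i})
    :
    XExact = {x | x ∈ X ∧ ∃ s : ℝ, ∃ r : Fin N → ℝ,
      0 ≤ s ∧ (∀ i, 0 ≤ r i) ∧
      ε * (N : ℝ) * s - ∑ i, r i ≥ θ * (N : ℝ) ∧
      (∀ i p, max (f i p x) 0 ≥ s - r i) ∧
      ∀ p, (q p + d p - ∑ j, a p j * x j) / dstar (b p) ≥ s} := by
  have hdual (p : Fin P) : 0 ≤ dstar (b p) := by
    rw [hdstar]
    exact Real.sSup_nonneg' ⟨0, ⟨0, by simp [(nrm_eq_zero 0).2 rfl], by simp⟩, le_rfl⟩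
  have hcard (x : Fin L → ℝ) (p : Fin P) : ε * (N : ℝ) ≤
      #{i | f i p x ≤ (q p + d p - ∑ j, a p j * x j) / dstar (b p)} := calc
    ε * (N : ℝ) ≤ (k + 1 : ℕ) := by
      rw [hk]
      exact_mod_cast (Nat.lt_floor_add_one (ε * (N : ℝ))).le
    _ ≤ #{i | ∑ j, b p j * ξ i j ≤ q p} := by
      rw [hq]
      exact_mod_cast lt_card_le_sort_apply (fun i => ∑ j, b p j * ξ i j) ⟨k, hkN⟩
    _ ≤ #{i | f i p x ≤ (q p + d p - ∑ j, a p j * x j) / dstar (b p)} := by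
      refine mod_cast card_le_card <| monotone_filter_right _ fun i _ hi => ?_
      rw [hf]
      gcongr
      exact hdual p
  have hδ : 0 < θ * (N : ℝ) := by positivity
  simpa only [hXExact, IsFeasible, and_assoc] using
    stmt_0_general hδ X f _ fun x _ => hcard x
end

section
/- For every κ ∈ [0,1]^N, the Linear Approximation and the Strengthened Linear Approximation have the same x-feasible region: X_LA(κ) = X_SLA(κ). -/
/-!
Write `τ = εN` and `δ = θN`. Given a solution `(s, r)` of the Linear Approximation, decrease `s`
to some `t` and every slack `rᵢ` to `(rᵢ - (s - t))⁺`. This changes the budget `τ s - ∑ᵢ rᵢ` by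
`∑ᵢ min rᵢ (s - t) - τ (s - t)`, which is nonnegative as soon as at least `τ` slacks are `≥ s - t`.
For each constraint `p`, the margins of at least `k + 1 ≥ τ` samples lie below the quantile bound,
so their slacks are at least `s - t` when `t` is the positive part of that bound. Hence `s` can be
lowered to the smallest quantile bound, which is positive: otherwise `t = 0` would be reached with
a positive budget, although the budget at `t = 0` is nonpositive.
-/

open Finset

section Feasibility

variable {ι J V : Type*} [Fintype ι]

/-- The feasible region of the Linear Approximation in the decision `x`, for arbitrary margin
functions `f i p` and weights `κ`; the paper's case is `τ = ε N` and `δ = θ N`. -/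
def linearApprox (τ δ : ℝ) (X : Set V) (f : ι → J → V → ℝ) (κ : ι → ℝ) : Set V :=
  {x | x ∈ X ∧ ∃ s : ℝ, ∃ r : ι → ℝ, 0 ≤ s ∧ (∀ i, 0 ≤ r i) ∧ δ ≤ τ * s - ∑ i, r i ∧
    ∀ i p, s - r i ≤ κ i * f i p x}

/-- The feasible region of the Strengthened Linear Approximation: `linearApprox` with the
additional bounds `s ≤ m p x`. In the paper `m p x` is the `(k + 1)`-th smallest of the margins
`f i p x`. -/
def strengthenedLinearApprox (τ δ : ℝ) (X : Set V) (f : ι → J → V → ℝ) (m : J → V → ℝ)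
    (κ : ι → ℝ) : Set V :=
  {x | x ∈ X ∧ ∃ s : ℝ, ∃ r : ι → ℝ, 0 ≤ s ∧ (∀ i, 0 ≤ r i) ∧ δ ≤ τ * s - ∑ i, r i ∧
    (∀ i p, s - r i ≤ κ i * f i p x) ∧ ∀ p, s ≤ m p x}

lemma strengthenedLinearApprox_subset_linearApprox (τ δ : ℝ) (X : Set V) (f : ι → J → V → ℝ)
    (m : J → V → ℝ) (κ : ι → ℝ) :
    strengthenedLinearApprox τ δ X f m κ ⊆ linearApprox τ δ X f κ :=
  fun _ ⟨hx, s, r, hs, hr, hbudget, hcover, _⟩ ↦ ⟨hx, s, r, hs, hr, hbudget, hcover⟩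

variable {τ δ s t : ℝ} {r : ι → ℝ}

lemma le_card_filter_of_imp {A B : ι → Prop} [DecidablePred A] [DecidablePred B]
    (hAB : ∀ i, A i → B i) (hA : τ ≤ #{i | A i}) : τ ≤ #{i | B i} :=
  hA.trans (Nat.cast_le.2 (card_le_card (monotone_filter_right univ fun i _ ↦ hAB i)))

lemma mul_le_sum_min {c : ℝ} (hc : 0 ≤ c) (hr : ∀ i, 0 ≤ r i) (hcard : τ ≤ #{i | c ≤ r i}) :
    τ * c ≤ ∑ i, min (r i) c :=
  calc τ * c ≤ #{i | c ≤ r i} * c := by gcongr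
    _ = ∑ i with c ≤ r i, c := by rw [sum_const, nsmul_eq_mul]
    _ = ∑ i with c ≤ r i, min (r i) c :=
      sum_congr rfl fun _ hi ↦ (min_eq_right (mem_filter.1 hi).2).symm
    _ ≤ ∑ i, min (r i) c :=
      sum_le_sum_of_subset_of_nonneg (filter_subset _ _) fun i _ _ ↦ le_min (hr i) hc

lemma budget_le_budget_posPart_sub (hts : t ≤ s) (hr : ∀ i, 0 ≤ r i)
    (hcard : τ ≤ #{i | s - t ≤ r i}) :
    τ * s - ∑ i, r i ≤ τ * t - ∑ i, (r i - (s - t))⁺ := by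
  have hmin := mul_le_sum_min (sub_nonneg.2 hts) hr hcard
  have hsplit : ∑ i, min (r i) (s - t) = ∑ i, r i - ∑ i, (r i - (s - t))⁺ := by
    rw [← sum_sub_distrib]
    exact sum_congr rfl fun i _ ↦ inf_eq_sub_posPart_sub _ _
  linarith

lemma budget_le_budget_of_le_card {h : ι → ℝ} {c : ℝ} (hs : 0 ≤ s) (hr : ∀ i, 0 ≤ r i)
    (hcover : ∀ i, s - r i ≤ h i) (hcard : τ ≤ #{i | h i ≤ c⁺}) (hcs : c ≤ s) :
    τ * s - ∑ i, r i ≤ τ * c⁺ - ∑ i, (r i - (s - c⁺))⁺ :=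
  budget_le_budget_posPart_sub (sup_le hcs hs) hr
    (le_card_filter_of_imp (fun i hi ↦ by linarith [hcover i]) hcard)

lemma pos_of_le_card {h : ι → ℝ} {c : ℝ} (hδ : 0 < δ) (hs : 0 ≤ s) (hr : ∀ i, 0 ≤ r i)
    (hbudget : δ ≤ τ * s - ∑ i, r i) (hcover : ∀ i, s - r i ≤ h i)
    (hcard : τ ≤ #{i | h i ≤ c⁺}) : 0 < c := by
  by_contra! hc
  have hle := budget_le_budget_of_le_card hs hr hcover hcard (hc.trans hs)
  rw [posPart_of_nonpos hc, mul_zero, sub_zero] at hle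
  have hsum : 0 ≤ ∑ i, (r i - s)⁺ := sum_nonneg fun _ _ ↦ posPart_nonneg _
  linarith

lemma exists_feasible_le_of_le_card [Finite J] {m : J → ℝ} {g : ι → J → ℝ} (hδ : 0 < δ)
    (hs : 0 ≤ s) (hr : ∀ i, 0 ≤ r i) (hbudget : δ ≤ τ * s - ∑ i, r i)
    (hcover : ∀ i p, s - r i ≤ g i p) (hcard : ∀ p, τ ≤ #{i | g i p ≤ (m p)⁺}) :
    ∃ t : ℝ, ∃ u : ι → ℝ, 0 ≤ t ∧ (∀ i, 0 ≤ u i) ∧ δ ≤ τ * t - ∑ i, u i ∧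
      (∀ i p, t - u i ≤ g i p) ∧ ∀ p, t ≤ m p := by
  by_cases! hsm : ∀ p, s ≤ m p
  · exact ⟨s, r, hs, hr, hbudget, hcover, hsm⟩
  obtain ⟨p, hps⟩ := hsm
  have : Nonempty J := ⟨p⟩
  obtain ⟨p₀, hmin⟩ := Finite.exists_min m
  have hpos : 0 < m p₀ := pos_of_le_card hδ hs hr hbudget (hcover · p₀) (hcard p₀)
  have hle := budget_le_budget_of_le_card hs hr (hcover · p₀) (hcard p₀) ((hmin p).trans hps.le)
  rw [posPart_of_nonneg hpos.le] at hle
  refine ⟨m p₀, fun i ↦ (r i - (s - m p₀))⁺, hpos.le, fun _ ↦ posPart_nonneg _,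
    hbudget.trans hle, fun i p ↦ ?_, hmin⟩
  linarith [hcover i p, le_posPart (r i - (s - m p₀))]

end Feasibility

lemma mul_le_posPart {c y : ℝ} (hc : 0 ≤ c ∧ c ≤ 1) : c * y ≤ y⁺ :=
  (mul_le_mul_of_nonneg_left (le_posPart y) hc.1).trans
    (mul_le_of_le_one_left (posPart_nonneg y) hc.2)

theorem stmt_2_general {ι J V : Type*} [Fintype ι] [Finite J] {τ δ : ℝ} (hδ : 0 < δ) {X : Set V}
    {f : ι → J → V → ℝ} {m : J → V → ℝ} (hcard : ∀ x ∈ X, ∀ p, τ ≤ #{i | f i p x ≤ m p x})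
    {κ : ι → ℝ} (hκ : ∀ i, 0 ≤ κ i ∧ κ i ≤ 1) :
    linearApprox τ δ X f κ = strengthenedLinearApprox τ δ X f m κ := by
  refine Set.Subset.antisymm ?_ (strengthenedLinearApprox_subset_linearApprox τ δ X f m κ)
  rintro x ⟨hx, s, r, hs, hr, hbudget, hcover⟩
  refine ⟨hx, exists_feasible_le_of_le_card hδ hs hr hbudget hcover fun p ↦
    le_card_filter_of_imp (fun i hi ↦ ?_) (hcard x hx p)⟩
  exact (mul_le_posPart (hκ i)).trans (posPart_mono hi)

lemma lt_card_le_sort {α : Type*} [LinearOrder α] {n : ℕ} (y : Fin n → α) (k : Fin n) :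
    k < #{i | y i ≤ (y ∘ Tuple.sort y) k} := by
  have hsorted := (Tuple.lt_card_le_iff_apply_le_of_monotone (Tuple.monotone_sort y)).2
    (le_refl ((y ∘ Tuple.sort y) k))
  rwa [card_equiv (Tuple.sort y) (t := {i | y i ≤ (y ∘ Tuple.sort y) k}) (by simp)] at hsorted

theorem stmt_2
    (N K L P : ℕ) (hN : 0 < N) (hK : 0 < K) (hL : 0 < L) (hP : 0 < P)
    (nrm : (Fin K → ℝ) → ℝ)
    (nrm_eq_zero : ∀ u : Fin K → ℝ, nrm u = 0 ↔ u = 0)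
    (nrm_smul : ∀ (c : ℝ) (u : Fin K → ℝ), nrm (c • u) = |c| * nrm u)
    (nrm_triangle : ∀ u w : Fin K → ℝ, nrm (u + w) ≤ nrm u + nrm w)
    (dstar : (Fin K → ℝ) → ℝ)
    (hdstar : ∀ v : Fin K → ℝ,
      dstar v = sSup ((fun u : Fin K → ℝ => ∑ j, v j * u j) '' {u | nrm u ≤ 1}))
    (ξ : Fin N → Fin K → ℝ)
    (a : Fin P → Fin L → ℝ) (b : Fin P → Fin K → ℝ) (hb : ∀ p, b p ≠ 0)
    (d : Fin P → ℝ)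
    (ε θ : ℝ) (hε0 : 0 < ε) (hε1 : ε < 1) (hθ : 0 < θ)
    (k : ℕ) (hk : k = ⌊ε * (N : ℝ)⌋₊) (hkN : k < N)
    (X : Set (Fin L → ℝ))
    (f : Fin N → Fin P → (Fin L → ℝ) → ℝ)
    (hf : ∀ i p x, f i p x =
      ((∑ j, b p j * ξ i j) + d p - ∑ j, a p j * x j) / dstar (b p))
    (q : Fin P → ℝ)
    (hq : ∀ p, q p =
      ((fun i => ∑ j, b p j * ξ i j) ∘ Tuple.sort (fun i => ∑ j, b p j * ξ i j)) ⟨k, hkN⟩)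
    (XLA : (Fin N → ℝ) → Set (Fin L → ℝ))
    (hXLA : ∀ κ : Fin N → ℝ, XLA κ = {x | x ∈ X ∧ ∃ s : ℝ, ∃ r : Fin N → ℝ,
      0 ≤ s ∧ (∀ i, 0 ≤ r i) ∧
      ε * (N : ℝ) * s - ∑ i, r i ≥ θ * (N : ℝ) ∧
      ∀ i p, κ i * f i p x ≥ s - r i})
    (XSLA : (Fin N → ℝ) → Set (Fin L → ℝ))
    (hXSLA : ∀ κ : Fin N → ℝ, XSLA κ = {x | x ∈ X ∧ ∃ s : ℝ, ∃ r : Fin N → ℝ,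
      0 ≤ s ∧ (∀ i, 0 ≤ r i) ∧
      ε * (N : ℝ) * s - ∑ i, r i ≥ θ * (N : ℝ) ∧
      (∀ i p, κ i * f i p x ≥ s - r i) ∧
      ∀ p, (q p + d p - ∑ j, a p j * x j) / dstar (b p) ≥ s})
    :
    ∀ κ : Fin N → ℝ, (∀ i, 0 ≤ κ i ∧ κ i ≤ 1) → XLA κ = XSLA κ := by
  intro κ hκ
  have hdstar_nonneg (v : Fin K → ℝ) : 0 ≤ dstar v := by
    rw [hdstar]
    exact Real.sSup_nonneg' ⟨0, ⟨0, by simp [(nrm_eq_zero 0).2 rfl], by simp⟩, le_rfl⟩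
  have hquantile (p : Fin P) : ε * N ≤ #{i | ∑ j, b p j * ξ i j ≤ q p} := by
    rw [hq]
    have hlt := lt_card_le_sort (fun i ↦ ∑ j, b p j * ξ i j) ⟨k, hkN⟩
    exact (Nat.lt_of_floor_lt (hk ▸ hlt)).le
  have hcard (x : Fin L → ℝ) (p : Fin P) :
      ε * N ≤ #{i | f i p x ≤ (q p + d p - ∑ j, a p j * x j) / dstar (b p)} := by
    refine le_card_filter_of_imp (fun i hi ↦ ?_) (hquantile p)
    rw [hf]
    gcongr
    exact hdstar_nonneg _
  rw [hXLA, hXSLA]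
  exact stmt_2_general (by positivity) (fun x _ ↦ hcard x) hκ
end

section
/- The equivalence X_SLA(𝟙) = X_Exact holds (with 𝟙 := (1,…,1) ∈ ℝ^N) under either of the following conditions: (1) ξ_i ∈ S(x) for all i ∈ [N] and all x ∈ X_Exact; or (2) ε ≤ 1/N. -/
/-!
Once all `f i p x` are nonnegative, the positive parts in the exact region are inactive. If a
certificate `(s, r)` violates the quantile cuts, lower `s` to the smallest quantile `m` and
replace `r i` by `max (r i - (s - m)) 0`. At least `α = ε N` samples lie at or below `m` for the
minimizing `p`; each of them has `r i ≥ s - m`, so `∑ i, r i` drops by at least `α (s - m)` and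
the budget constraint survives. When `α ≤ 1`, nonnegativity is automatic, because
`s - r i ≥ α s - ∑ j, r j > 0` makes every positive part strictly positive.
-/

open Finset

theorem lt_card_le_comp_sort {n : ℕ} {R : Type*} [LinearOrder R] (g : Fin n → R) (k : Fin n) :
    k < #{i | g i ≤ (g ∘ Tuple.sort g) k} :=
  calc (k : ℕ) < #{i | (g ∘ Tuple.sort g) i ≤ (g ∘ Tuple.sort g) k} :=
      (Tuple.lt_card_le_iff_apply_le_of_monotone (Tuple.monotone_sort g)).2 le_rfl
    _ = #{i | g i ≤ (g ∘ Tuple.sort g) k} := card_equiv (Tuple.sort g) (by simp)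

theorem le_card_map_le_comp_sort_floor {n : ℕ} {R S : Type*} [LinearOrder R] [Preorder S]
    [DecidableLE S] (g : Fin n → R) {φ : R → S} (hφ : Monotone φ) {t : ℝ} (ht : ⌊t⌋₊ < n) :
    t ≤ #{i | φ (g i) ≤ φ ((g ∘ Tuple.sort g) ⟨⌊t⌋₊, ht⟩)} :=
  calc t ≤ (⌊t⌋₊ + 1 : ℕ) := by exact_mod_cast (Nat.lt_floor_add_one t).le
    _ ≤ #{i | g i ≤ (g ∘ Tuple.sort g) ⟨⌊t⌋₊, ht⟩} :=
      Nat.cast_le.2 (lt_card_le_comp_sort g ⟨⌊t⌋₊, ht⟩)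
    _ ≤ #{i | φ (g i) ≤ φ ((g ∘ Tuple.sort g) ⟨⌊t⌋₊, ht⟩)} :=
      Nat.cast_le.2 (card_le_card (monotone_filter_right _ fun _ _ hi => hφ hi))

section Certificates

variable {ι π : Type*} [Fintype ι] {α β s m : ℝ} {r : ι → ℝ} {g g' : ι → π → ℝ}

theorem card_mul_le_sum_min {t : ℝ} (ht : 0 ≤ t) (hr : ∀ i, 0 ≤ r i) :
    #{i | t ≤ r i} * t ≤ ∑ i, min t (r i) :=
  calc (#{i | t ≤ r i} : ℝ) * t = ∑ i with t ≤ r i, t := by rw [sum_const, nsmul_eq_mul]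
    _ ≤ ∑ i with t ≤ r i, min t (r i) :=
      sum_le_sum fun i hi => le_min le_rfl (mem_filter.1 hi).2
    _ ≤ ∑ i, min t (r i) :=
      sum_le_sum_of_subset_of_nonneg (filter_subset _ _) fun i _ _ => le_min ht (hr i)

/-- The dual form of a worst-case CVaR constraint. For `0 < β`, `α ≤ card ι` and nonempty finite
`π`, such a pair `(s, r)` exists iff the `α` smallest of the margins `⨅ p, g i p` sum to at least
`β` (with a fractional last summand when `α` is not an integer). Here `s` is a threshold and `r i`
bounds the shortfall of sample `i` below it. In the paper `α = ε N` and `β = θ N`. -/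
def IsCVaRCertificate (α β : ℝ) (g : ι → π → ℝ) (s : ℝ) (r : ι → ℝ) : Prop :=
  0 ≤ s ∧ (∀ i, 0 ≤ r i) ∧ α * s - ∑ i, r i ≥ β ∧ ∀ i p, g i p ≥ s - r i

namespace IsCVaRCertificate

theorem mono (h : IsCVaRCertificate α β g s r) (hg : ∀ i p, g i p ≤ g' i p) :
    IsCVaRCertificate α β g' s r := by
  obtain ⟨hs, hr, hβ, hsr⟩ := h
  exact ⟨hs, hr, hβ, fun i p => (hsr i p).trans (hg i p)⟩

theorem budget_pos (h : IsCVaRCertificate α β g s r) (hβ : 0 < β) : 0 < α := by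
  obtain ⟨hs, hr, hobj, -⟩ := h
  have hsum : 0 ≤ ∑ i, r i := sum_nonneg fun i _ => hr i
  exact pos_of_mul_pos_left (by linarith : 0 < α * s) hs

theorem margin_pos_of_le_one (h : IsCVaRCertificate α β g s r) (hα : α ≤ 1) (hβ : 0 < β)
    (i : ι) (p : π) : 0 < g i p := by
  obtain ⟨hs, hr, hobj, hsr⟩ := h
  calc 0 < α * s - ∑ j, r j := hβ.trans_le hobj
    _ ≤ s - r i := sub_le_sub (mul_le_of_le_one_left hs hα)
      (single_le_sum (fun j _ => hr j) (mem_univ i))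
    _ ≤ g i p := hsr i p

theorem lower_threshold (h : IsCVaRCertificate α β g s r) (hm : 0 ≤ m) (hms : m ≤ s)
    (hcard : α ≤ #{i | s - r i ≤ m}) :
    IsCVaRCertificate α β g m fun i => max (r i - (s - m)) 0 := by
  obtain ⟨-, hr, hobj, hsr⟩ := h
  refine ⟨hm, fun i => le_max_right _ _, ?_, fun i p => ?_⟩
  · have hsplit : ∑ i, max (r i - (s - m)) 0 = ∑ i, r i - ∑ i, min (s - m) (r i) := by
      rw [← sum_sub_distrib]
      refine sum_congr rfl fun i _ => ?_
      rw [← max_sub_sub_left, sub_self]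
    have hdrop : α * (s - m) ≤ ∑ i, min (s - m) (r i) :=
      calc α * (s - m) ≤ #{i | s - r i ≤ m} * (s - m) := by gcongr
        _ = #{i | s - m ≤ r i} * (s - m) := by simp only [sub_le_comm]
        _ ≤ ∑ i, min (s - m) (r i) := card_mul_le_sum_min (sub_nonneg.2 hms) hr
    linarith
  · linarith [hsr i p, le_max_left (r i - (s - m)) 0]

theorem exists_le_quantile [Finite π] (h : IsCVaRCertificate α β g s r) {c : π → ℝ}
    (hc : ∀ p, 0 ≤ c p) (hcard : ∀ p, α ≤ #{i | g i p ≤ c p}) :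
    ∃ s' r', IsCVaRCertificate α β g s' r' ∧ ∀ p, s' ≤ c p := by
  by_cases hle : ∀ p, s ≤ c p
  · exact ⟨s, r, h, hle⟩
  obtain ⟨p₁, hp₁⟩ := not_forall.1 hle
  have : Nonempty π := ⟨p₁⟩
  obtain ⟨p₀, hmin⟩ := Finite.exists_min c
  have hlt : c p₀ < s := (hmin p₁).trans_lt (not_le.1 hp₁)
  refine ⟨c p₀, _, h.lower_threshold (hc p₀) hlt.le ?_, hmin⟩
  refine (hcard p₀).trans (Nat.cast_le.2 (card_le_card fun i hi => ?_))
  simp only [mem_filter, mem_univ, true_and] at hi ⊢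
  exact (h.2.2.2 i p₀).trans hi

end IsCVaRCertificate

end Certificates

section Regions

variable {ι π E : Type*} [Fintype ι]

/-- The exact feasible region `X_Exact`, for arbitrary safety functions `f i p : E → ℝ`. -/
def exactRegion (α β : ℝ) (X : Set E) (f : ι → π → E → ℝ) : Set E :=
  {x | x ∈ X ∧ ∃ s r, IsCVaRCertificate α β (fun i p => max (f i p x) 0) s r}

/-- The region `X_SLA(κ)`, where `κ` scales the margins and `c p x` stands for the normalized
quantile `(q_p + d_p - a_pᵀ x) / ‖b_p‖_*` bounding the threshold. -/
def slaRegion (α β : ℝ) (X : Set E) (f : ι → π → E → ℝ) (c : π → E → ℝ) (κ : ι → ℝ) : Set E :=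
  {x | x ∈ X ∧ ∃ s r, IsCVaRCertificate α β (fun i p => κ i * f i p x) s r ∧ ∀ p, c p x ≥ s}

theorem slaRegion_one_subset_exactRegion {α β : ℝ} {X : Set E} {f : ι → π → E → ℝ}
    {c : π → E → ℝ} : slaRegion α β X f c (fun _ => 1) ⊆ exactRegion α β X f := by
  rintro x ⟨hx, s, r, hsr, -⟩
  exact ⟨hx, s, r, hsr.mono fun i p => (one_mul (f i p x)).trans_le (le_max_left _ _)⟩

theorem nonneg_of_mem_exactRegion_of_le_one {α β : ℝ} {X : Set E} {f : ι → π → E → ℝ} {x : E}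
    (hx : x ∈ exactRegion α β X f) (hα : α ≤ 1) (hβ : 0 < β) (i : ι) (p : π) : 0 ≤ f i p x := by
  obtain ⟨-, s, r, hsr⟩ := hx
  have hmax : 0 < max (f i p x) 0 := hsr.margin_pos_of_le_one hα hβ i p
  exact ((lt_max_iff.1 hmax).resolve_right (lt_irrefl 0)).le

theorem mem_slaRegion_one_of_nonneg [Finite π] {α β : ℝ} (hβ : 0 < β) {X : Set E}
    {f : ι → π → E → ℝ} {c : π → E → ℝ} {x : E} (hcard : ∀ p, α ≤ #{i | f i p x ≤ c p x})
    (hx : x ∈ exactRegion α β X f) (hf : ∀ i p, 0 ≤ f i p x) :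
    x ∈ slaRegion α β X f c (fun _ => 1) := by
  obtain ⟨hxX, s, r, hsr⟩ := hx
  have hc : ∀ p, 0 ≤ c p x := fun p => by
    have hpos : 0 < #{i | f i p x ≤ c p x} :=
      Nat.cast_pos.1 ((hsr.budget_pos hβ).trans_le (hcard p))
    obtain ⟨i, hi⟩ := card_pos.1 hpos
    exact (hf i p).trans (mem_filter.1 hi).2
  have hsr' : IsCVaRCertificate α β (fun i p => 1 * f i p x) s r :=
    hsr.mono fun i p => by rw [one_mul, max_eq_left (hf i p)]
  exact ⟨hxX, hsr'.exists_le_quantile hc (by simpa only [one_mul] using hcard)⟩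

theorem stmt_6_general [Finite π] {α β : ℝ} (hβ : 0 < β) (X : Set E) (f : ι → π → E → ℝ)
    (c : π → E → ℝ) (hcard : ∀ p x, α ≤ #{i | f i p x ≤ c p x})
    (h : (∀ i, ∀ x ∈ exactRegion α β X f, ∀ p, 0 ≤ f i p x) ∨ α ≤ 1) :
    slaRegion α β X f c (fun _ => 1) = exactRegion α β X f := by
  refine slaRegion_one_subset_exactRegion.antisymm fun x hx => ?_
  refine mem_slaRegion_one_of_nonneg hβ (hcard · x) hx ?_
  rcases h with hsafe | hα
  · exact fun i => hsafe i x hx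
  · exact nonneg_of_mem_exactRegion_of_le_one hx hα hβ

end Regions

theorem stmt_6
    (N K L P : ℕ) (hN : 0 < N) (hK : 0 < K) (hL : 0 < L) (hP : 0 < P)
    (nrm : (Fin K → ℝ) → ℝ)
    (nrm_eq_zero : ∀ u : Fin K → ℝ, nrm u = 0 ↔ u = 0)
    (nrm_smul : ∀ (c : ℝ) (u : Fin K → ℝ), nrm (c • u) = |c| * nrm u)
    (nrm_triangle : ∀ u w : Fin K → ℝ, nrm (u + w) ≤ nrm u + nrm w)
    (dstar : (Fin K → ℝ) → ℝ)
    (hdstar : ∀ v : Fin K → ℝ,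
      dstar v = sSup ((fun u : Fin K → ℝ => ∑ j, v j * u j) '' {u | nrm u ≤ 1}))
    (ξ : Fin N → Fin K → ℝ)
    (a : Fin P → Fin L → ℝ) (b : Fin P → Fin K → ℝ) (hb : ∀ p, b p ≠ 0)
    (d : Fin P → ℝ)
    (ε θ : ℝ) (hε0 : 0 < ε) (hε1 : ε < 1) (hθ : 0 < θ)
    (k : ℕ) (hk : k = ⌊ε * (N : ℝ)⌋₊) (hkN : k < N)
    (X : Set (Fin L → ℝ))
    (f : Fin N → Fin P → (Fin L → ℝ) → ℝ)
    (hf : ∀ i p x, f i p x =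
      ((∑ j, b p j * ξ i j) + d p - ∑ j, a p j * x j) / dstar (b p))
    (q : Fin P → ℝ)
    (hq : ∀ p, q p =
      ((fun i => ∑ j, b p j * ξ i j) ∘ Tuple.sort (fun i => ∑ j, b p j * ξ i j)) ⟨k, hkN⟩)
    (XExact : Set (Fin L → ℝ))
    (hXExact : XExact = {x | x ∈ X ∧ ∃ s : ℝ, ∃ r : Fin N → ℝ,
      0 ≤ s ∧ (∀ i, 0 ≤ r i) ∧
      ε * (N : ℝ) * s - ∑ i, r i ≥ θ * (N : ℝ) ∧
      ∀ i p, max (f i p x) 0 ≥ s - r i})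
    (XSLA : (Fin N → ℝ) → Set (Fin L → ℝ))
    (hXSLA : ∀ κ : Fin N → ℝ, XSLA κ = {x | x ∈ X ∧ ∃ s : ℝ, ∃ r : Fin N → ℝ,
      0 ≤ s ∧ (∀ i, 0 ≤ r i) ∧
      ε * (N : ℝ) * s - ∑ i, r i ≥ θ * (N : ℝ) ∧
      (∀ i p, κ i * f i p x ≥ s - r i) ∧
      ∀ p, (q p + d p - ∑ j, a p j * x j) / dstar (b p) ≥ s})
    :
    ((∀ i : Fin N, ∀ x ∈ XExact, ∀ p,
        0 ≤ (∑ j, b p j * ξ i j) + d p - ∑ j, a p j * x j) ∨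
      ε ≤ 1 / (N : ℝ)) →
    XSLA (fun _ => 1) = XExact := by
  intro h
  subst hk
  have hN' : (0 : ℝ) < N := Nat.cast_pos.2 hN
  have hdual (p : Fin P) : 0 ≤ dstar (b p) := by
    rw [hdstar]
    exact Real.sSup_nonneg' ⟨0, ⟨0, by simp [(nrm_eq_zero 0).2 rfl], by simp⟩, le_rfl⟩
  have hcard (p : Fin P) (x : Fin L → ℝ) :
      ε * N ≤ #{i | f i p x ≤ (q p + d p - ∑ j, a p j * x j) / dstar (b p)} := by
    have hmono : Monotone fun t => (t + d p - ∑ j, a p j * x j) / dstar (b p) := fun t u htu =>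
      div_le_div_of_nonneg_right (by linarith) (hdual p)
    simpa only [hf, hq] using le_card_map_le_comp_sort_floor _ hmono hkN
  have hexact : XExact = exactRegion (ε * N) (θ * N) X f := hXExact
  have hsla : XSLA (fun _ => 1) = slaRegion (ε * N) (θ * N) X f
      (fun p x => (q p + d p - ∑ j, a p j * x j) / dstar (b p)) (fun _ => 1) := by
    simp only [hXSLA, slaRegion, IsCVaRCertificate, and_assoc]
  rw [hsla, hexact]
  refine stmt_6_general (mul_pos hθ hN') X f _ hcard (h.imp (fun hsafe i x hx p => ?_) ?_)
  · rw [hf]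
    exact div_nonneg (hsafe i x (hexact ▸ hx) p) (hdual p)
  · exact (le_div_iff₀ hN').1
end

section
/- For any fixed x ∈ X_Exact, there exist s ∈ ℝ and r ∈ ℝ^N such that s equals the (k+1)-th smallest value among {D_i(x)}_{i∈[N]} and (s, r) satisfies all the constraints of the exact reformulation, namely s ≥ 0, r_i ≥ 0 for all i, εNs − Σ_{i∈[N]} r_i ≥ θN, and (f_{i,p}(x))^+ ≥ s − r_i for all i ∈ [N], p ∈ [P]. -/
/-!
The concave piecewise linear function `s ↦ e * s - ∑ i, (s - g i)⁺` has slope `e - #{i | g i < s}`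
to the left of `s` and `e - #{i | g i ≤ s}` to the right, so it is maximal at every `t` with
`#{i | g i < t} ≤ e ≤ #{i | g i ≤ t}`. If `k ≤ e ≤ k + 1`, the `(k + 1)`-th smallest value of `g` is
such a `t`. For fixed `s`, the cheapest admissible `r` is `r i = (s - D i)⁺`, which turns the budget
constraint into a lower bound on this function with `e = ε * N` and `g = D`; replacing `s` by the
maximizer keeps the bound.
-/

open Finset

section OrderStatistic

variable {α : Type*} [LinearOrder α] {n : ℕ}

/-- The `k`-th order statistic of `g`, counted from zero and with multiplicity: the `(k + 1)`-th
smallest of the values `g i`. -/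
def orderStatistic (g : Fin n → α) (k : Fin n) : α :=
  g (Tuple.sort g k)

theorem monotone_orderStatistic (g : Fin n → α) : Monotone (orderStatistic g) :=
  Tuple.monotone_sort g

theorem card_filter_lt_orderStatistic_le (g : Fin n → α) (k : Fin n) :
    #{i | g i < orderStatistic g k} ≤ (k : ℕ) := by
  have hsub : ({i | g i < orderStatistic g k} : Finset (Fin n)) ⊆
      (Iio k).map (Tuple.sort g).toEmbedding := by
    intro i hi
    obtain ⟨j, rfl⟩ := (Tuple.sort g).surjective i
    exact mem_map_of_mem _ <| mem_Iio.2 <|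
      (monotone_orderStatistic g).reflect_lt (mem_filter.1 hi).2
  simpa only [card_map, Fin.card_Iio] using card_le_card hsub

theorem lt_card_filter_le_orderStatistic (g : Fin n → α) (k : Fin n) :
    (k : ℕ) < #{i | g i ≤ orderStatistic g k} := by
  have hsub : (Iic k).map (Tuple.sort g).toEmbedding ⊆
      ({i | g i ≤ orderStatistic g k} : Finset (Fin n)) := by
    intro i hi
    obtain ⟨j, hj, rfl⟩ := mem_map.1 hi
    exact mem_filter.2 ⟨mem_univ _, monotone_orderStatistic g (mem_Iic.1 hj)⟩
  simpa only [card_map, Fin.card_Iic, Nat.add_one_le_iff] using card_le_card hsub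

end OrderStatistic

section SumPosPart

variable {ι α : Type*} [Fintype ι] [CommRing α] [LinearOrder α] [IsStrictOrderedRing α]

-- `#S` runs through the integer subgradients at `t` of the convex function `s ↦ ∑ i, (s - g i)⁺`.
theorem sum_posPart_sub_le_add_card_mul {g : ι → α} {t : α} {S : Finset ι}
    (hlt : ∀ i, g i < t → i ∈ S) (hle : ∀ i ∈ S, g i ≤ t) (s : α) :
    ∑ i, (t - g i)⁺ ≤ ∑ i, (s - g i)⁺ + #S * (t - s) := by
  classical
  have hterm (i : ι) : (t - g i)⁺ ≤ (s - g i)⁺ + if i ∈ S then t - s else 0 := by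
    split_ifs with hi
    · rw [posPart_of_nonneg (sub_nonneg.2 (hle i hi))]
      linarith [le_posPart (s - g i)]
    · rw [posPart_of_nonpos (sub_nonpos.2 (not_lt.1 (mt (hlt i) hi))), add_zero]
      exact posPart_nonneg _
  calc ∑ i, (t - g i)⁺
      ≤ ∑ i, ((s - g i)⁺ + if i ∈ S then t - s else 0) := sum_le_sum fun i _ => hterm i
    _ = ∑ i, (s - g i)⁺ + #S * (t - s) := by
      rw [sum_add_distrib, sum_ite_mem, univ_inter, sum_const, nsmul_eq_mul]

theorem mul_sub_sum_posPart_le {g : ι → α} {e t : α} (hlt : (#{i | g i < t} : α) ≤ e)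
    (hle : e ≤ #{i | g i ≤ t}) (s : α) :
    e * s - ∑ i, (s - g i)⁺ ≤ e * t - ∑ i, (t - g i)⁺ := by
  suffices ∑ i, (t - g i)⁺ ≤ ∑ i, (s - g i)⁺ + e * (t - s) by linarith
  rcases le_total s t with hst | hts
  · calc ∑ i, (t - g i)⁺
        ≤ ∑ i, (s - g i)⁺ + #{i | g i < t} * (t - s) :=
          sum_posPart_sub_le_add_card_mul (by simp) (by simpa using fun _ => le_of_lt) s
      _ ≤ ∑ i, (s - g i)⁺ + e * (t - s) := by
          gcongr
  · calc ∑ i, (t - g i)⁺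
        ≤ ∑ i, (s - g i)⁺ + #{i | g i ≤ t} * (t - s) :=
          sum_posPart_sub_le_add_card_mul (by simpa using fun _ => le_of_lt) (by simp) s
      _ ≤ ∑ i, (s - g i)⁺ + e * (t - s) :=
          add_le_add_right (mul_le_mul_of_nonpos_right hle (sub_nonpos.2 hts)) _

theorem mul_sub_sum_posPart_le_orderStatistic {n : ℕ} (g : Fin n → α) (k : Fin n) {e : α}
    (hke : (k : α) ≤ e) (hek : e ≤ (k : α) + 1) (s : α) :
    e * s - ∑ i, (s - g i)⁺ ≤
      e * orderStatistic g k - ∑ i, (orderStatistic g k - g i)⁺ := by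
  refine mul_sub_sum_posPart_le ?_ ?_ s
  · exact (Nat.cast_le.2 (card_filter_lt_orderStatistic_le g k)).trans hke
  · exact hek.trans (mod_cast Nat.succ_le_of_lt (lt_card_filter_le_orderStatistic g k))

end SumPosPart

-- In the paper, `h i p = (f i p x)⁺`, `e = ε * N` and `c = θ * N`.
theorem stmt_7_general {N : ℕ} {κ : Type*} [Nonempty κ] (k : Fin N) {e c s : ℝ}
    (hke : (k : ℝ) ≤ e) (hek : e ≤ (k : ℝ) + 1) {h : Fin N → κ → ℝ} (h_nonneg : ∀ i p, 0 ≤ h i p)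
    {r : Fin N → ℝ} (hr : ∀ i, 0 ≤ r i) (hbudget : e * s - ∑ i, r i ≥ c)
    (hcover : ∀ i p, h i p ≥ s - r i) :
    ∃ t : ℝ, ∃ q : Fin N → ℝ,
      t = orderStatistic (fun i => ⨅ p, h i p) k ∧
      0 ≤ t ∧ (∀ i, 0 ≤ q i) ∧ e * t - ∑ i, q i ≥ c ∧ ∀ i p, h i p ≥ t - q i := by
  set D : Fin N → ℝ := fun i => ⨅ p, h i p
  have hD_le (i : Fin N) (p : κ) : D i ≤ h i p :=
    ciInf_le ⟨0, Set.forall_mem_range.2 (h_nonneg i)⟩ p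
  have hr_ge (i : Fin N) : (s - D i)⁺ ≤ r i :=
    sup_le (sub_le_comm.1 (le_ciInf (hcover i))) (hr i)
  refine ⟨orderStatistic D k, fun i => (orderStatistic D k - D i)⁺, rfl,
    Real.iInf_nonneg (h_nonneg _), fun i => posPart_nonneg _, ?_, fun i p => ?_⟩
  · calc c ≤ e * s - ∑ i, r i := hbudget
      _ ≤ e * s - ∑ i, (s - D i)⁺ := sub_le_sub_left (sum_le_sum fun i _ => hr_ge i) _
      _ ≤ _ := mul_sub_sum_posPart_le_orderStatistic D k hke hek s
  · exact (sub_le_comm.1 (le_posPart _)).trans (hD_le i p)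

theorem stmt_7
    (N K L P : ℕ) (hN : 0 < N) (hK : 0 < K) (hL : 0 < L) (hP : 0 < P)
    (nrm : (Fin K → ℝ) → ℝ)
    (nrm_eq_zero : ∀ u : Fin K → ℝ, nrm u = 0 ↔ u = 0)
    (nrm_smul : ∀ (c : ℝ) (u : Fin K → ℝ), nrm (c • u) = |c| * nrm u)
    (nrm_triangle : ∀ u w : Fin K → ℝ, nrm (u + w) ≤ nrm u + nrm w)
    (dstar : (Fin K → ℝ) → ℝ)
    (hdstar : ∀ v : Fin K → ℝ,
      dstar v = sSup ((fun u : Fin K → ℝ => ∑ j, v j * u j) '' {u | nrm u ≤ 1}))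
    (ξ : Fin N → Fin K → ℝ)
    (a : Fin P → Fin L → ℝ) (b : Fin P → Fin K → ℝ) (hb : ∀ p, b p ≠ 0)
    (d : Fin P → ℝ)
    (ε θ : ℝ) (hε0 : 0 < ε) (hε1 : ε < 1) (hθ : 0 < θ)
    (k : ℕ) (hk : k = ⌊ε * (N : ℝ)⌋₊) (hkN : k < N)
    (X : Set (Fin L → ℝ))
    (f : Fin N → Fin P → (Fin L → ℝ) → ℝ)
    (hf : ∀ i p x, f i p x =
      ((∑ j, b p j * ξ i j) + d p - ∑ j, a p j * x j) / dstar (b p))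
    (XExact : Set (Fin L → ℝ))
    (hXExact : XExact = {x | x ∈ X ∧ ∃ s : ℝ, ∃ r : Fin N → ℝ,
      0 ≤ s ∧ (∀ i, 0 ≤ r i) ∧
      ε * (N : ℝ) * s - ∑ i, r i ≥ θ * (N : ℝ) ∧
      ∀ i p, max (f i p x) 0 ≥ s - r i})
    (D : Fin N → (Fin L → ℝ) → ℝ)
    (hD : ∀ i x, D i x = ⨅ p, max (f i p x) 0)
    :
    ∀ x ∈ XExact, ∃ s : ℝ, ∃ r : Fin N → ℝ,
      s = ((fun i => D i x) ∘ Tuple.sort (fun i => D i x)) ⟨k, hkN⟩ ∧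
      0 ≤ s ∧ (∀ i, 0 ≤ r i) ∧
      ε * (N : ℝ) * s - ∑ i, r i ≥ θ * (N : ℝ) ∧
      ∀ i p, max (f i p x) 0 ≥ s - r i := by
  intro x hx
  obtain ⟨-, s, r, -, hr, hbudget, hcover⟩ := hXExact ▸ hx
  have : Nonempty (Fin P) := ⟨⟨0, hP⟩⟩
  have hkε : (k : ℝ) ≤ ε * N := hk ▸ Nat.floor_le (by positivity)
  have hεk : ε * N ≤ (k : ℝ) + 1 := hk ▸ (Nat.lt_floor_add_one _).le
  simp only [hD]
  exact stmt_7_general ⟨k, hkN⟩ hkε hεk (fun _ _ => le_max_right _ _) hr hbudget hcover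
end

section
/- Fix κ ∈ [0,1]^N and define the approximated distance D̂_i(x) := κ_i · min_{p∈[P]} (f_{i,p}(x))^+. For any x ∈ X_LA(κ), there exist s ∈ ℝ and r ∈ ℝ^N such that s equals the (k+1)-th smallest value among {D̂_i(x)}_{i∈[N]} and (s, r) satisfies all the constraints defining X_LA(κ), namely s ≥ 0, r_i ≥ 0 for all i, εNs − Σ_{i∈[N]} r_i ≥ θN, and κ_i f_{i,p}(x) ≥ s − r_i for all i ∈ [N], p ∈ [P]. -/
/-!
Write `c = εN` and `m i = min_p κ i * f i p`. For a given `s ≥ 0` the cheapest admissible `r` is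
`r i = (s - m i)⁺`, so `s` extends to a feasible pair exactly when the concave function
`s ↦ c * s - ∑ i, (s - m i)⁺` reaches the required value there. The slopes of this function at `t`
are `c - #{i | m i < t}` on the left and `c - #{i | m i ≤ t}` on the right, hence it is maximal at
the `(⌊c⌋ + 1)`-th smallest `m i`. The approximated distances are the `(m i)⁺`, and truncating at
zero only moves the maximizer into the half-line `0 ≤ s`, so replacing `s` by it preserves
feasibility.
-/

open scoped Finset

section OrderStatistics

variable {n : ℕ} {α : Type*} [LinearOrder α] (u : Fin n → α) (k : Fin n)

lemma card_filter_comp_equiv {ι ι' : Type*} [Fintype ι] [Fintype ι'] (e : ι ≃ ι') (p : ι' → Prop)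
    [DecidablePred p] : #{i | p (e i)} = #{j | p j} :=
  Finset.card_equiv e fun i => by simp only [Finset.mem_filter_univ]

lemma card_filter_lt_sort_le : #{i | u i < (u ∘ Tuple.sort u) k} ≤ k := by
  have hsorted : #{i | (u ∘ Tuple.sort u) i < (u ∘ Tuple.sort u) k} ≤ k := by
    rw [← not_lt, Tuple.lt_card_lt_iff_apply_lt_of_monotone (Tuple.monotone_sort u)]
    exact lt_irrefl _
  rwa [← card_filter_comp_equiv (Tuple.sort u)]

lemma lt_card_filter_le_sort : k < #{i | u i ≤ (u ∘ Tuple.sort u) k} := by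
  have hsorted : k < #{i | (u ∘ Tuple.sort u) i ≤ (u ∘ Tuple.sort u) k} :=
    (Tuple.lt_card_le_iff_apply_le_of_monotone (Tuple.monotone_sort u)).2 le_rfl
  rwa [← card_filter_comp_equiv (Tuple.sort u)]

end OrderStatistics

section Infimum

variable {π : Type*} [Nonempty π]

lemma ciInf_max_const {α : Type*} [ConditionallyCompleteLinearOrder α] [TopologicalSpace α]
    [OrderTopology α] {g : π → α} (hg : BddBelow (Set.range g)) (a : α) :
    ⨅ p, max (g p) a = max (⨅ p, g p) a :=
  ((monotone_id.max monotone_const).map_ciInf_of_continuousAt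
    (continuous_id.max continuous_const).continuousAt hg).symm

lemma mul_ciInf_max_zero {κ : ℝ} (hκ : 0 ≤ κ) {g : π → ℝ}
    (hg : BddBelow (Set.range fun p => κ * g p)) :
    κ * ⨅ p, max (g p) 0 = max (⨅ p, κ * g p) 0 := by
  simp only [Real.mul_iInf_of_nonneg hκ, mul_max_of_nonneg _ _ hκ, mul_zero, ciInf_max_const hg]

end Infimum

section QuantileObjective

variable {ι : Type*} [Fintype ι]

/-- The concave piecewise linear function whose maximizers are the quantiles of the values `m i`
at level `c`, with `c` measured as a number of values rather than as a fraction. -/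
def quantileObjective (c : ℝ) (m : ι → ℝ) (s : ℝ) : ℝ :=
  c * s - ∑ i, max (s - m i) 0

variable {c s t : ℝ} {m : ι → ℝ}

lemma quantileObjective_le_of_le_of_card_lt_le (hst : s ≤ t) (hc : #{i | m i < t} ≤ c) :
    quantileObjective c m s ≤ quantileObjective c m t := by
  have hterm (i : ι) : max (t - m i) 0 ≤ max (s - m i) 0 + if m i < t then t - s else 0 := by
    grind
  have hsum : ∑ i, max (t - m i) 0 ≤ ∑ i, max (s - m i) 0 + #{i | m i < t} * (t - s) := by
    simpa only [Finset.sum_add_distrib, ← Finset.sum_filter, Finset.sum_const, nsmul_eq_mul]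
      using Finset.sum_le_sum fun i (_ : i ∈ Finset.univ) => hterm i
  have hslope : #{i | m i < t} * (t - s) ≤ c * (t - s) :=
    mul_le_mul_of_nonneg_right hc (sub_nonneg.2 hst)
  unfold quantileObjective
  linarith

lemma quantileObjective_le_of_ge_of_le_card_le (hts : t ≤ s) (hc : c ≤ #{i | m i ≤ t}) :
    quantileObjective c m s ≤ quantileObjective c m t := by
  have hterm (i : ι) : max (t - m i) 0 + (if m i ≤ t then s - t else 0) ≤ max (s - m i) 0 := by
    grind
  have hsum : ∑ i, max (t - m i) 0 + #{i | m i ≤ t} * (s - t) ≤ ∑ i, max (s - m i) 0 := by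
    simpa only [Finset.sum_add_distrib, ← Finset.sum_filter, Finset.sum_const, nsmul_eq_mul]
      using Finset.sum_le_sum fun i (_ : i ∈ Finset.univ) => hterm i
  have hslope : c * (s - t) ≤ #{i | m i ≤ t} * (s - t) :=
    mul_le_mul_of_nonneg_right hc (sub_nonneg.2 hts)
  unfold quantileObjective
  linarith

lemma quantileObjective_le_sort_max_zero {n : ℕ} {m : Fin n → ℝ} {k : Fin n} (hs : 0 ≤ s)
    (hkc : (k : ℕ) ≤ c) (hck : c ≤ (k : ℕ) + 1) :
    quantileObjective c m s ≤ quantileObjective c m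
      (((fun i => max (m i) 0) ∘ Tuple.sort fun i => max (m i) 0) k) := by
  set D : Fin n → ℝ := fun i => max (m i) 0
  set t := (D ∘ Tuple.sort D) k
  have ht : 0 ≤ t := le_max_right _ _
  rcases le_or_gt t s with hts | hst
  · apply quantileObjective_le_of_ge_of_le_card_le hts
    have hcard : #{i | m i ≤ t} = #{i | D i ≤ t} := by simp only [D, max_le_iff, ht, and_true]
    calc c ≤ (k : ℕ) + 1 := hck
      _ ≤ #{i | m i ≤ t} := by rw [hcard]; exact_mod_cast lt_card_filter_le_sort D k
  · apply quantileObjective_le_of_le_of_card_lt_le hst.le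
    have ht_pos : 0 < t := hs.trans_lt hst
    have hcard : #{i | m i < t} = #{i | D i < t} := by simp only [D, max_lt_iff, ht_pos, and_true]
    calc (#{i | m i < t} : ℝ) ≤ (k : ℕ) := by
          rw [hcard]; exact_mod_cast card_filter_lt_sort_le D k
      _ ≤ c := hkc

end QuantileObjective

section Feasibility

variable {ι π : Type*} [Fintype ι]

/-- The pair `(s, r)` satisfies the constraints defining `X_LA(κ)`, for the scaled margins
`g i p = κ_i f_{i,p}(x)` of a fixed point `x`, with `c = εN` and `β = θN`. -/
def IsLAFeasible (c β : ℝ) (g : ι → π → ℝ) (s : ℝ) (r : ι → ℝ) : Prop :=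
  0 ≤ s ∧ (∀ i, 0 ≤ r i) ∧ c * s - ∑ i, r i ≥ β ∧ ∀ i p, g i p ≥ s - r i

variable {c β s : ℝ} {g : ι → π → ℝ} {r : ι → ℝ}

lemma IsLAFeasible.bddBelow_range (h : IsLAFeasible c β g s r) (i : ι) :
    BddBelow (Set.range (g i)) :=
  ⟨s - r i, Set.forall_mem_range.2 (h.2.2.2 i)⟩

lemma exists_isLAFeasible_iff [Nonempty π] (hg : ∀ i, BddBelow (Set.range (g i))) :
    (∃ r, IsLAFeasible c β g s r) ↔
      0 ≤ s ∧ β ≤ quantileObjective c (fun i => ⨅ p, g i p) s := by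
  constructor
  · rintro ⟨r, hs, hr, hβ, hmargin⟩
    have hr_ge : ∑ i, max (s - ⨅ p, g i p) 0 ≤ ∑ i, r i :=
      Finset.sum_le_sum fun i _ => max_le (sub_le_comm.1 (le_ciInf (hmargin i))) (hr i)
    exact ⟨hs, by unfold quantileObjective; linarith⟩
  · rintro ⟨hs, hβ⟩
    refine ⟨fun i => max (s - ⨅ p, g i p) 0, hs, fun i => le_max_right _ _, hβ, fun i p => ?_⟩
    exact (sub_le_comm.1 (le_max_left _ _)).trans (ciInf_le (hg i) p)

end Feasibility

theorem stmt_8_general {n : ℕ} {π : Type*} [Nonempty π] {c β : ℝ} {k : Fin n}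
    (hkc : (k : ℕ) ≤ c) (hck : c ≤ (k : ℕ) + 1) {κ : Fin n → ℝ} (hκ : ∀ i, 0 ≤ κ i)
    {f : Fin n → π → ℝ} {D : Fin n → ℝ} (hD : ∀ i, D i = κ i * ⨅ p, max (f i p) 0)
    (hfeas : ∃ s r, IsLAFeasible c β (fun i p => κ i * f i p) s r) :
    ∃ s r, s = (D ∘ Tuple.sort D) k ∧ IsLAFeasible c β (fun i p => κ i * f i p) s r := by
  obtain ⟨s, r, hr⟩ := hfeas
  have hbdd := hr.bddBelow_range
  obtain ⟨hs, hβ⟩ := (exists_isLAFeasible_iff hbdd).1 ⟨r, hr⟩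
  obtain rfl : D = fun i => max (⨅ p, κ i * f i p) 0 :=
    funext fun i => (hD i).trans (mul_ciInf_max_zero (hκ i) (hbdd i))
  obtain ⟨r', hr'⟩ := (exists_isLAFeasible_iff hbdd).2
    ⟨le_max_right _ _, hβ.trans (quantileObjective_le_sort_max_zero hs hkc hck)⟩
  exact ⟨_, r', rfl, hr'⟩

theorem stmt_8
    (N K L P : ℕ) (hN : 0 < N) (hK : 0 < K) (hL : 0 < L) (hP : 0 < P)
    (nrm : (Fin K → ℝ) → ℝ)
    (nrm_eq_zero : ∀ u : Fin K → ℝ, nrm u = 0 ↔ u = 0)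
    (nrm_smul : ∀ (c : ℝ) (u : Fin K → ℝ), nrm (c • u) = |c| * nrm u)
    (nrm_triangle : ∀ u w : Fin K → ℝ, nrm (u + w) ≤ nrm u + nrm w)
    (dstar : (Fin K → ℝ) → ℝ)
    (hdstar : ∀ v : Fin K → ℝ,
      dstar v = sSup ((fun u : Fin K → ℝ => ∑ j, v j * u j) '' {u | nrm u ≤ 1}))
    (ξ : Fin N → Fin K → ℝ)
    (a : Fin P → Fin L → ℝ) (b : Fin P → Fin K → ℝ) (hb : ∀ p, b p ≠ 0)
    (d : Fin P → ℝ)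
    (ε θ : ℝ) (hε0 : 0 < ε) (hε1 : ε < 1) (hθ : 0 < θ)
    (k : ℕ) (hk : k = ⌊ε * (N : ℝ)⌋₊) (hkN : k < N)
    (X : Set (Fin L → ℝ))
    (f : Fin N → Fin P → (Fin L → ℝ) → ℝ)
    (hf : ∀ i p x, f i p x =
      ((∑ j, b p j * ξ i j) + d p - ∑ j, a p j * x j) / dstar (b p))
    (XLA : (Fin N → ℝ) → Set (Fin L → ℝ))
    (hXLA : ∀ κ : Fin N → ℝ, XLA κ = {x | x ∈ X ∧ ∃ s : ℝ, ∃ r : Fin N → ℝ,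
      0 ≤ s ∧ (∀ i, 0 ≤ r i) ∧
      ε * (N : ℝ) * s - ∑ i, r i ≥ θ * (N : ℝ) ∧
      ∀ i p, κ i * f i p x ≥ s - r i})
    (κ : Fin N → ℝ) (hκ : ∀ i, 0 ≤ κ i ∧ κ i ≤ 1)
    (Dhat : Fin N → (Fin L → ℝ) → ℝ)
    (hDhat : ∀ i x, Dhat i x = κ i * ⨅ p, max (f i p x) 0)
    :
    ∀ x ∈ XLA κ, ∃ s : ℝ, ∃ r : Fin N → ℝ,
      s = ((fun i => Dhat i x) ∘ Tuple.sort (fun i => Dhat i x)) ⟨k, hkN⟩ ∧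
      0 ≤ s ∧ (∀ i, 0 ≤ r i) ∧
      ε * (N : ℝ) * s - ∑ i, r i ≥ θ * (N : ℝ) ∧
      ∀ i p, κ i * f i p x ≥ s - r i := by
  intro x hx
  have : NeZero P := ⟨hP.ne'⟩
  obtain ⟨-, hfeas⟩ := hXLA κ ▸ hx
  exact stmt_8_general (hk ▸ Nat.floor_le (by positivity)) (hk ▸ (Nat.lt_floor_add_one _).le)
    (fun i => (hκ i).1) (fun i => hDhat i x) hfeas
end

section
/- The exact reformulation can be expressed as a mixed-integer program with a suitably large but finite big-M constant: assuming X is bounded, there exists M₀ > 0 such that for every M ≥ M₀, X_Exact = {x ∈ X : ∃ z ∈ {0,1}^N, s ≥ 0, r ∈ ℝ^N with r ≥ 0, εNs − Σ_{i∈[N]} r_i ≥ θN, f_{i,p}(x) + M z_i ≥ s − r_i for all i ∈ [N], p ∈ [P], and M(1 − z_i) ≥ s − r_i for all i ∈ [N]}. -/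
/-!
For a sample `i` put `t = s - r i`. Since `t ≤ max v 0` means `t ≤ v ∨ t ≤ 0` and the second
alternative does not mention `p`, the exact constraints of sample `i` hold iff either
`t ≤ f i p x` for all `p`, or `t ≤ 0`. The binary variable `z i` selects one alternative, and a
bound `M` on all `|f i p x|` makes the relaxed constraint of the other alternative automatic.
-/

theorem forall_le_max_zero_iff_exists_binary {R π : Type*} [Ring R] [LinearOrder R]
    [IsOrderedRing R] [Nonempty π] {v : π → R} {M : R} (hv : ∀ p, |v p| ≤ M) (t : R) :
    (∀ p, t ≤ max (v p) 0) ↔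
      ∃ z : R, (z = 0 ∨ z = 1) ∧ (∀ p, t ≤ v p + M * z) ∧ t ≤ M * (1 - z) := by
  have le_M_of_forall_le (ht : ∀ p, t ≤ v p) : t ≤ M :=
    let ⟨p⟩ := ‹Nonempty π›
    (ht p).trans (le_of_abs_le (hv p))
  have le_add_M_of_nonpos (ht : t ≤ 0) (p : π) : t ≤ v p + M :=
    ht.trans (neg_le_iff_add_nonneg.mp (neg_le_of_abs_le (hv p)))
  calc (∀ p, t ≤ max (v p) 0)
      ↔ (∀ p, t ≤ v p) ∨ t ≤ 0 := by
        simp only [le_max_iff, forall_or_right]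
    _ ↔ ((∀ p, t ≤ v p) ∧ t ≤ M) ∨ ((∀ p, t ≤ v p + M) ∧ t ≤ 0) := by
        rw [and_iff_left_of_imp le_M_of_forall_le, and_iff_right_of_imp le_add_M_of_nonpos]
    _ ↔ ∃ z : R, (z = 0 ∨ z = 1) ∧ (∀ p, t ≤ v p + M * z) ∧ t ≤ M * (1 - z) := by
        simp only [or_and_right, exists_or, exists_eq_left, mul_zero, add_zero, sub_zero, mul_one,
          sub_self]

theorem forall_forall_le_max_zero_iff_exists_binary {R ι π : Type*} [Ring R] [LinearOrder R]
    [IsOrderedRing R] [Nonempty π] {v : ι → π → R} {M : R} (hv : ∀ i p, |v i p| ≤ M) (t : ι → R) :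
    (∀ i p, t i ≤ max (v i p) 0) ↔
      ∃ z : ι → R, (∀ i, z i = 0 ∨ z i = 1) ∧ (∀ i p, t i ≤ v i p + M * z i) ∧
        ∀ i, t i ≤ M * (1 - z i) := by
  simp only [fun i => forall_le_max_zero_iff_exists_binary (hv i) (t i), Classical.skolem,
    forall_and]

theorem exists_pos_forall_norm_le_of_isBounded_image {E F ι : Type*} [SeminormedAddCommGroup F]
    [Finite ι] {g : ι → E → F} {X : Set E} (hg : ∀ i, Bornology.IsBounded (g i '' X)) :
    ∃ M : ℝ, 0 < M ∧ ∀ i, ∀ x ∈ X, ‖g i x‖ ≤ M := by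
  obtain ⟨M, hM_pos, hM⟩ := (Bornology.isBounded_iUnion.mpr hg).exists_pos_norm_le
  exact ⟨M, hM_pos, fun i x hx =>
    hM _ (Set.mem_iUnion_of_mem i (Set.mem_image_of_mem (g i) hx))⟩

theorem isBounded_image_of_continuous {E F : Type*} [PseudoMetricSpace E] [ProperSpace E]
    [PseudoMetricSpace F] {g : E → F} (hg : Continuous g) {X : Set E}
    (hX : Bornology.IsBounded X) : Bornology.IsBounded (g '' X) :=
  (hX.isCompact_closure.image hg).isBounded.subset (Set.image_mono subset_closure)

theorem stmt_11_general {E ι π : Type*} [Finite ι] [Finite π] [Nonempty π]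
    {f : ι → π → E → ℝ} {X : Set E} (hf : ∀ i p, Bornology.IsBounded (f i p '' X))
    (C : ℝ → (ι → ℝ) → Prop) :
    ∃ M₀ : ℝ, 0 < M₀ ∧ ∀ M : ℝ, M₀ ≤ M →
      {x | x ∈ X ∧ ∃ s : ℝ, ∃ r : ι → ℝ, C s r ∧ ∀ i p, max (f i p x) 0 ≥ s - r i} =
      {x | x ∈ X ∧ ∃ z : ι → ℝ, ∃ s : ℝ, ∃ r : ι → ℝ,
        (∀ i, z i = 0 ∨ z i = 1) ∧ C s r ∧
        (∀ i p, f i p x + M * z i ≥ s - r i) ∧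
        ∀ i, M * (1 - z i) ≥ s - r i} := by
  obtain ⟨M₀, hM₀_pos, hM₀⟩ := exists_pos_forall_norm_le_of_isBounded_image
    (g := fun q : ι × π => f q.1 q.2) fun q => hf q.1 q.2
  refine ⟨M₀, hM₀_pos, fun M hM => Set.ext fun x => and_congr_right fun hx => ?_⟩
  have exact_iff_bigM (s : ℝ) (r : ι → ℝ) :=
    forall_forall_le_max_zero_iff_exists_binary (fun i p => (hM₀ (i, p) x hx).trans hM)
      (fun i => s - r i)
  constructor
  · rintro ⟨s, r, hC, hexact⟩
    obtain ⟨z, hz, hbigM⟩ := (exact_iff_bigM s r).mp hexact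
    exact ⟨z, s, r, hz, hC, hbigM⟩
  · rintro ⟨z, s, r, hz, hC, hbigM⟩
    exact ⟨s, r, hC, (exact_iff_bigM s r).mpr ⟨z, hz, hbigM⟩⟩

theorem stmt_11
    (N K L P : ℕ) (hN : 0 < N) (hK : 0 < K) (hL : 0 < L) (hP : 0 < P)
    (nrm : (Fin K → ℝ) → ℝ)
    (nrm_eq_zero : ∀ u : Fin K → ℝ, nrm u = 0 ↔ u = 0)
    (nrm_smul : ∀ (c : ℝ) (u : Fin K → ℝ), nrm (c • u) = |c| * nrm u)
    (nrm_triangle : ∀ u w : Fin K → ℝ, nrm (u + w) ≤ nrm u + nrm w)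
    (dstar : (Fin K → ℝ) → ℝ)
    (hdstar : ∀ v : Fin K → ℝ,
      dstar v = sSup ((fun u : Fin K → ℝ => ∑ j, v j * u j) '' {u | nrm u ≤ 1}))
    (ξ : Fin N → Fin K → ℝ)
    (a : Fin P → Fin L → ℝ) (b : Fin P → Fin K → ℝ) (hb : ∀ p, b p ≠ 0)
    (d : Fin P → ℝ)
    (ε θ : ℝ) (hε0 : 0 < ε) (hε1 : ε < 1) (hθ : 0 < θ)
    (k : ℕ) (hk : k = ⌊ε * (N : ℝ)⌋₊) (hkN : k < N)
    (X : Set (Fin L → ℝ))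
    (f : Fin N → Fin P → (Fin L → ℝ) → ℝ)
    (hf : ∀ i p x, f i p x =
      ((∑ j, b p j * ξ i j) + d p - ∑ j, a p j * x j) / dstar (b p))
    (XExact : Set (Fin L → ℝ))
    (hXExact : XExact = {x | x ∈ X ∧ ∃ s : ℝ, ∃ r : Fin N → ℝ,
      0 ≤ s ∧ (∀ i, 0 ≤ r i) ∧
      ε * (N : ℝ) * s - ∑ i, r i ≥ θ * (N : ℝ) ∧
      ∀ i p, max (f i p x) 0 ≥ s - r i})
    (hXbdd : Bornology.IsBounded X)
    :
    ∃ M₀ : ℝ, 0 < M₀ ∧ ∀ M : ℝ, M₀ ≤ M →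
      XExact = {x | x ∈ X ∧ ∃ z : Fin N → ℝ, ∃ s : ℝ, ∃ r : Fin N → ℝ,
        (∀ i, z i = 0 ∨ z i = 1) ∧ 0 ≤ s ∧ (∀ i, 0 ≤ r i) ∧
        ε * (N : ℝ) * s - ∑ i, r i ≥ θ * (N : ℝ) ∧
        (∀ i p, f i p x + M * z i ≥ s - r i) ∧
        ∀ i, M * (1 - z i) ≥ s - r i} := by
  have : Nonempty (Fin P) := Fin.pos_iff_nonempty.mp hP
  have hf_cont (i : Fin N) (p : Fin P) : Continuous (f i p) := by
    rw [funext (hf i p)]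
    fun_prop
  simpa only [hXExact, and_assoc] using
    stmt_11_general (fun i p => isBounded_image_of_continuous (hf_cont i p) hXbdd)
      fun s r => 0 ≤ s ∧ (∀ i, 0 ≤ r i) ∧ ε * (N : ℝ) * s - ∑ i, r i ≥ θ * (N : ℝ)
end

section
/- For every x ∈ X_Exact, the (k+1)-th smallest value among {D_i(x)}_{i∈[N]} is at least θ/ε; in particular, for at least N − k indices i ∈ [N] the sample ξ_i satisfies b_p^⊤ξ_i + d_p − a_p^⊤x > 0 for all p ∈ [P]. -/
/-!
The constraints `s - r i ≤ D i` and `0 ≤ r i` make every sample with `D i ≤ v` pay at least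
`(s - v)⁺` out of the budget `∑ i, r i ≤ ε N s - θ N`. Taking for `v` the `(k + 1)`-th smallest
value of `D`, at least `k + 1 ≥ ε N` samples pay, so `ε N (s - v) ≤ ε N s - θ N`, that is,
`θ / ε ≤ v`. The `N - k` samples whose value is at least `v > 0` are strictly safe.
-/

open Finset

section OrderStatistics

variable {n : ℕ} {α : Type*} [LinearOrder α]

theorem succ_le_card_le_sort (D : Fin n → α) (k : Fin n) :
    (k : ℕ) + 1 ≤ #{i | D i ≤ (D ∘ Tuple.sort D) k} := by
  rw [← Fin.card_Iic, ← card_map (Tuple.sort D).toEmbedding]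
  refine card_le_card fun i hi ↦ ?_
  obtain ⟨j, hj, rfl⟩ := mem_map.1 hi
  exact mem_filter.2 ⟨mem_univ _, Tuple.monotone_sort D (mem_Iic.1 hj)⟩

theorem sub_le_card_sort_le (D : Fin n → α) (k : Fin n) :
    n - k ≤ #{i | (D ∘ Tuple.sort D) k ≤ D i} := by
  rw [← Fin.card_Ici, ← card_map (Tuple.sort D).toEmbedding]
  refine card_le_card fun i hi ↦ ?_
  obtain ⟨j, hj, rfl⟩ := mem_map.1 hi
  exact mem_filter.2 ⟨mem_univ _, Tuple.monotone_sort D (mem_Ici.1 hj)⟩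

end OrderStatistics

theorem mul_sub_le_sum_of_le_card {ι R : Type*} [Fintype ι] [Ring R] [LinearOrder R]
    [IsOrderedRing R] {T : Finset ι} {r : ι → R} {c s v : R} (hc : 0 ≤ c) (hcT : c ≤ #T)
    (hr : ∀ i, 0 ≤ r i) (hT : ∀ i ∈ T, s - r i ≤ v) : c * (s - v) ≤ ∑ i, r i :=
  calc
    c * (s - v) ≤ c * max (s - v) 0 := mul_le_mul_of_nonneg_left (le_max_left _ _) hc
    _ ≤ #T * max (s - v) 0 := mul_le_mul_of_nonneg_right hcT (le_max_right _ _)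
    _ = #T • max (s - v) 0 := (nsmul_eq_mul _ _).symm
    _ ≤ ∑ i ∈ T, r i :=
      card_nsmul_le_sum T r _ fun i hi ↦ max_le (sub_le_comm.1 (hT i hi)) (hr i)
    _ ≤ ∑ i, r i := sum_le_univ_sum_of_nonneg hr

theorem div_le_sort_of_mul_le_sub_sum {R : Type*} [Field R] [LinearOrder R]
    [IsStrictOrderedRing R] {n : ℕ} {D r : Fin n → R} {s ε θ : R} {k : Fin n} (hε : 0 < ε)
    (hk : ε * n ≤ k + 1) (hr : ∀ i, 0 ≤ r i) (hD : ∀ i, s - r i ≤ D i)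
    (hsum : θ * n ≤ ε * n * s - ∑ i, r i) :
    θ / ε ≤ (D ∘ Tuple.sort D) k := by
  set v := (D ∘ Tuple.sort D) k
  have hn : (0 : R) < n := by exact_mod_cast k.pos
  have hcard : ε * n ≤ #{i | D i ≤ v} :=
    hk.trans (by exact_mod_cast succ_le_card_le_sort D k)
  have hpaid : ε * n * (s - v) ≤ ∑ i, r i :=
    mul_sub_le_sum_of_le_card (by positivity) hcard hr
      fun i hi ↦ (hD i).trans (mem_filter.1 hi).2
  rw [div_le_iff₀ hε]
  refine le_of_mul_le_mul_right ?_ hn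
  linarith

theorem pos_of_iInf_max_zero_pos {ι : Sort*} [Finite ι] {g : ι → ℝ}
    (h : 0 < ⨅ p, max (g p) 0) (p : ι) : 0 < g p := by
  have hp : 0 < max (g p) 0 := h.trans_le (ciInf_le (Set.finite_range _).bddBelow p)
  exact (lt_max_iff.1 hp).resolve_right (lt_irrefl 0)

theorem sSup_dotProduct_image_nonneg {ι : Type*} [Fintype ι] (v : ι → ℝ) {B : Set (ι → ℝ)}
    (hB : 0 ∈ B) : 0 ≤ sSup ((fun u ↦ ∑ j, v j * u j) '' B) :=
  Real.sSup_nonneg' ⟨0, ⟨0, hB, dotProduct_zero v⟩, le_rfl⟩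

theorem stmt_12
    (N K L P : ℕ) (hN : 0 < N) (hK : 0 < K) (hL : 0 < L) (hP : 0 < P)
    (nrm : (Fin K → ℝ) → ℝ)
    (nrm_eq_zero : ∀ u : Fin K → ℝ, nrm u = 0 ↔ u = 0)
    (nrm_smul : ∀ (c : ℝ) (u : Fin K → ℝ), nrm (c • u) = |c| * nrm u)
    (nrm_triangle : ∀ u w : Fin K → ℝ, nrm (u + w) ≤ nrm u + nrm w)
    (dstar : (Fin K → ℝ) → ℝ)
    (hdstar : ∀ v : Fin K → ℝ,
      dstar v = sSup ((fun u : Fin K → ℝ => ∑ j, v j * u j) '' {u | nrm u ≤ 1}))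
    (ξ : Fin N → Fin K → ℝ)
    (a : Fin P → Fin L → ℝ) (b : Fin P → Fin K → ℝ) (hb : ∀ p, b p ≠ 0)
    (d : Fin P → ℝ)
    (ε θ : ℝ) (hε0 : 0 < ε) (hε1 : ε < 1) (hθ : 0 < θ)
    (k : ℕ) (hk : k = ⌊ε * (N : ℝ)⌋₊) (hkN : k < N)
    (X : Set (Fin L → ℝ))
    (f : Fin N → Fin P → (Fin L → ℝ) → ℝ)
    (hf : ∀ i p x, f i p x =
      ((∑ j, b p j * ξ i j) + d p - ∑ j, a p j * x j) / dstar (b p))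
    (XExact : Set (Fin L → ℝ))
    (hXExact : XExact = {x | x ∈ X ∧ ∃ s : ℝ, ∃ r : Fin N → ℝ,
      0 ≤ s ∧ (∀ i, 0 ≤ r i) ∧
      ε * (N : ℝ) * s - ∑ i, r i ≥ θ * (N : ℝ) ∧
      ∀ i p, max (f i p x) 0 ≥ s - r i})
    (D : Fin N → (Fin L → ℝ) → ℝ)
    (hD : ∀ i x, D i x = ⨅ p, max (f i p x) 0)
    :
    ∀ x ∈ XExact,
      θ / ε ≤ ((fun i => D i x) ∘ Tuple.sort (fun i => D i x)) ⟨k, hkN⟩ ∧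
      N - k ≤ Set.ncard {i : Fin N |
        ∀ p, 0 < (∑ j, b p j * ξ i j) + d p - ∑ j, a p j * x j} := by
  rw [hXExact]
  rintro x ⟨-, s, r, -, hr, hsum, hf_ge⟩
  have : Nonempty (Fin P) := ⟨⟨0, hP⟩⟩
  have hdstar_nonneg (v : Fin K → ℝ) : 0 ≤ dstar v :=
    hdstar v ▸ sSup_dotProduct_image_nonneg v (by simp [(nrm_eq_zero 0).2 rfl])
  have hD_ge (i : Fin N) : s - r i ≤ D i x := hD i x ▸ le_ciInf (hf_ge i)
  have hk_ge : ε * N ≤ k + 1 := hk ▸ (Nat.lt_floor_add_one _).le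
  have hquantile : θ / ε ≤ ((fun i ↦ D i x) ∘ Tuple.sort fun i ↦ D i x) ⟨k, hkN⟩ :=
    div_le_sort_of_mul_le_sub_sum hε0 hk_ge hr hD_ge hsum
  refine ⟨hquantile, (sub_le_card_sort_le (fun i ↦ D i x) ⟨k, hkN⟩).trans ?_⟩
  rw [← Set.ncard_coe_finset]
  refine Set.ncard_le_ncard (fun i hi p ↦ ?_) (Set.toFinite _)
  have hD_pos : 0 < D i x := (div_pos hθ hε0).trans_le (hquantile.trans (mem_filter.1 hi).2)
  have hf_pos : 0 < f i p x := pos_of_iInf_max_zero_pos (hD i x ▸ hD_pos) p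
  rw [hf, div_eq_mul_inv] at hf_pos
  exact pos_of_mul_pos_left hf_pos (inv_nonneg.2 (hdstar_nonneg (b p)))
end

section
/- Fix κ ∈ [0,1]^N and define D̂_i(x) := κ_i · min_{p∈[P]} (f_{i,p}(x))^+. For every x ∈ X_LA(κ), the (k+1)-th smallest value among {D̂_i(x)}_{i∈[N]} is at least θ/ε; in particular, min_{p∈[P]} f_{i,p}(x) > 0 for at least N − k indices i ∈ [N]. -/
/-!
Put `M = ε * N` and `q = θ / ε`. Membership in `X_LA(κ)` supplies `r ≥ 0` with
`∑ i, r i ≤ M * (s - q)` and `s - r i ≤ D̂ i`, so every index with `D̂ i < q` has `r i > s - q`.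
By Markov's inequality for the counting measure at most `M` indices have this property, hence at
most `k = ⌊M⌋`. Both conclusions follow from this count.
-/

open Finset

theorem card_filter_lt_le_of_sum_le_mul {ι R : Type*} [Semiring R] [LinearOrder R]
    [IsStrictOrderedRing R] {t : Finset ι} {r : ι → R} {c M : R} (hr : ∀ i ∈ t, 0 ≤ r i)
    (hM : 0 < M) (hsum : ∑ i ∈ t, r i ≤ M * c) : (#{i ∈ t | c < r i} : R) ≤ M := by
  have hc : 0 ≤ c := nonneg_of_mul_nonneg_right ((sum_nonneg hr).trans hsum) hM
  obtain hempty | hne := {i ∈ t | c < r i}.eq_empty_or_nonempty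
  · simpa only [hempty, card_empty, Nat.cast_zero] using hM.le
  have hlt : (#{i ∈ t | c < r i} : R) * c < M * c := calc
    (#{i ∈ t | c < r i} : R) * c = ∑ i ∈ t with c < r i, c := by
      rw [sum_const, nsmul_eq_mul]
    _ < ∑ i ∈ t with c < r i, r i :=
      sum_lt_sum_of_nonempty hne fun _ hi ↦ (mem_filter.1 hi).2
    _ ≤ ∑ i ∈ t, r i :=
      sum_le_sum_of_subset_of_nonneg (filter_subset _ t) fun i hi _ ↦ hr i hi
    _ ≤ M * c := hsum
  exact (lt_of_mul_lt_mul_right hlt hc).le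

theorem card_filter_lt_le_of_sub_le {ι R : Type*} [Ring R] [LinearOrder R]
    [IsStrictOrderedRing R] {t : Finset ι} {D r : ι → R} {s q M : R} (hr : ∀ i ∈ t, 0 ≤ r i)
    (hM : 0 < M) (hsum : ∑ i ∈ t, r i ≤ M * (s - q)) (hD : ∀ i ∈ t, s - r i ≤ D i) :
    (#{i ∈ t | D i < q} : R) ≤ M := by
  have hsub : {i ∈ t | D i < q} ⊆ {i ∈ t | s - q < r i} :=
    monotone_filter_right t fun i hi hlt ↦ sub_lt_comm.1 ((hD i hi).trans_lt hlt)
  exact (Nat.cast_le.2 (card_le_card hsub)).trans (card_filter_lt_le_of_sum_le_mul hr hM hsum)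

theorem le_comp_sort_iff_card_filter_lt_le {n : ℕ} {α : Type*} [LinearOrder α] {v : Fin n → α}
    {a : α} {j : Fin n} : a ≤ (v ∘ Tuple.sort v) j ↔ #{i | v i < a} ≤ (j : ℕ) := by
  have hcard : #{i | (v ∘ Tuple.sort v) i < a} = #{i | v i < a} :=
    card_equiv (Tuple.sort v) fun i ↦ by simp only [mem_filter_univ, Function.comp_apply]
  rw [← hcard, ← not_lt, ← not_lt,
    Tuple.lt_card_lt_iff_apply_lt_of_monotone (Tuple.monotone_sort v)]

theorem iInf_pos_of_iInf_max_zero_pos {ι α : Type*} [Nonempty ι]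
    [ConditionallyCompleteLinearOrder α] [Zero α] {f : ι → α} (h : 0 < ⨅ p, max (f p) 0) :
    0 < ⨅ p, f p := by
  have hbdd : BddBelow (Set.range fun p ↦ max (f p) 0) :=
    ⟨0, Set.forall_mem_range.2 fun p ↦ le_max_right (f p) 0⟩
  refine h.trans_le (le_ciInf fun p ↦ ?_)
  exact (le_max_iff.1 (ciInf_le hbdd p)).resolve_right h.not_ge

theorem le_mul_iInf_max_zero {ι : Type*} [Nonempty ι] {c κ : ℝ} {f : ι → ℝ} (hκ : 0 ≤ κ)
    (h : ∀ p, c ≤ κ * f p) : c ≤ κ * ⨅ p, max (f p) 0 := by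
  rw [Real.mul_iInf_of_nonneg hκ]
  exact le_ciInf fun p ↦ (h p).trans (mul_le_mul_of_nonneg_left (le_max_left _ _) hκ)

theorem stmt_13_general {N : ℕ} {ι : Type*} [Nonempty ι] {ε θ s : ℝ} {κ r D : Fin N → ℝ}
    {f : Fin N → ι → ℝ} {k : Fin N} (hε : 0 < ε) (hθ : 0 < θ) (hk : (k : ℕ) = ⌊ε * (N : ℝ)⌋₊)
    (hκ : ∀ i, 0 ≤ κ i) (hD : ∀ i, D i = κ i * ⨅ p, max (f i p) 0) (hr : ∀ i, 0 ≤ r i)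
    (hsum : θ * (N : ℝ) ≤ ε * (N : ℝ) * s - ∑ i, r i) (hf : ∀ i p, s - r i ≤ κ i * f i p) :
    θ / ε ≤ (D ∘ Tuple.sort D) k ∧ N - (k : ℕ) ≤ Set.ncard {i | 0 < ⨅ p, f i p} := by
  have hshortfall : ∑ i, r i ≤ ε * N * (s - θ / ε) := by
    have hq : ε * N * (θ / ε) = θ * N := by field_simp
    linarith
  have hsub_le (i : Fin N) : s - r i ≤ D i := hD i ▸ le_mul_iInf_max_zero (hκ i) (hf i)
  have hcard : #{i | D i < θ / ε} ≤ (k : ℕ) := hk ▸ Nat.le_floor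
    (card_filter_lt_le_of_sub_le (fun i _ ↦ hr i) (mul_pos hε (Nat.cast_pos.2 k.pos))
      hshortfall fun i _ ↦ hsub_le i)
  have hpos (i : Fin N) (hi : ¬ D i < θ / ε) : 0 < ⨅ p, f i p := by
    have hDi : 0 < κ i * ⨅ p, max (f i p) 0 := hD i ▸ (div_pos hθ hε).trans_le (not_lt.1 hi)
    exact iInf_pos_of_iInf_max_zero_pos (pos_of_mul_pos_right hDi (hκ i))
  refine ⟨le_comp_sort_iff_card_filter_lt_le.2 hcard, ?_⟩
  calc N - (k : ℕ) ≤ N - #{i | D i < θ / ε} := Nat.sub_le_sub_left hcard N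
    _ = #{i | ¬ D i < θ / ε} := Nat.sub_eq_of_eq_add' <| by
      rw [card_filter_add_card_filter_not, card_fin]
    _ ≤ Set.ncard {i | 0 < ⨅ p, f i p} := by
      rw [← Set.ncard_coe_finset, coe_filter_univ]
      exact Set.ncard_le_ncard hpos

theorem stmt_13
    (N K L P : ℕ) (hN : 0 < N) (hK : 0 < K) (hL : 0 < L) (hP : 0 < P)
    (nrm : (Fin K → ℝ) → ℝ)
    (nrm_eq_zero : ∀ u : Fin K → ℝ, nrm u = 0 ↔ u = 0)
    (nrm_smul : ∀ (c : ℝ) (u : Fin K → ℝ), nrm (c • u) = |c| * nrm u)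
    (nrm_triangle : ∀ u w : Fin K → ℝ, nrm (u + w) ≤ nrm u + nrm w)
    (dstar : (Fin K → ℝ) → ℝ)
    (hdstar : ∀ v : Fin K → ℝ,
      dstar v = sSup ((fun u : Fin K → ℝ => ∑ j, v j * u j) '' {u | nrm u ≤ 1}))
    (ξ : Fin N → Fin K → ℝ)
    (a : Fin P → Fin L → ℝ) (b : Fin P → Fin K → ℝ) (hb : ∀ p, b p ≠ 0)
    (d : Fin P → ℝ)
    (ε θ : ℝ) (hε0 : 0 < ε) (hε1 : ε < 1) (hθ : 0 < θ)
    (k : ℕ) (hk : k = ⌊ε * (N : ℝ)⌋₊) (hkN : k < N)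
    (X : Set (Fin L → ℝ))
    (f : Fin N → Fin P → (Fin L → ℝ) → ℝ)
    (hf : ∀ i p x, f i p x =
      ((∑ j, b p j * ξ i j) + d p - ∑ j, a p j * x j) / dstar (b p))
    (XLA : (Fin N → ℝ) → Set (Fin L → ℝ))
    (hXLA : ∀ κ : Fin N → ℝ, XLA κ = {x | x ∈ X ∧ ∃ s : ℝ, ∃ r : Fin N → ℝ,
      0 ≤ s ∧ (∀ i, 0 ≤ r i) ∧
      ε * (N : ℝ) * s - ∑ i, r i ≥ θ * (N : ℝ) ∧
      ∀ i p, κ i * f i p x ≥ s - r i})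
    (κ : Fin N → ℝ) (hκ : ∀ i, 0 ≤ κ i ∧ κ i ≤ 1)
    (Dhat : Fin N → (Fin L → ℝ) → ℝ)
    (hDhat : ∀ i x, Dhat i x = κ i * ⨅ p, max (f i p x) 0)
    :
    ∀ x ∈ XLA κ,
      θ / ε ≤ ((fun i => Dhat i x) ∘ Tuple.sort (fun i => Dhat i x)) ⟨k, hkN⟩ ∧
      N - k ≤ Set.ncard {i : Fin N | 0 < ⨅ p, f i p x} := by
  intro x hx
  obtain ⟨_, s, r, _, hr, hsum, hfr⟩ := hXLA κ ▸ hx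
  have : Nonempty (Fin P) := Fin.pos_iff_nonempty.1 hP
  exact stmt_13_general hε0 hθ hk (fun i ↦ (hκ i).1) (hDhat · x) hr hsum hfr
end

section
/- The worst-case CVaR approximation with the weighting vector w* ∈ ℝ^P defined by w*_p := ‖b_p‖_*^{-1} / Σ_{l∈[P]} ‖b_l‖_*^{-1} is an inner approximation of the exact reformulation: X_WCVaR(w*) ⊆ X_Exact. -/
/-!
The WCVaR constraints are homogeneous in the weights, so the normalising factor of `w*` can be
dropped, leaving the weights `‖b_p‖_*⁻¹`. For these the constraint on `β` reads `1 ≤ β`, and the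
weighted losses are exactly `-f_{i,p}(x)`, so that `s = -τ` and `r = α` solve the exact system.
In finite dimension the supremum defining the dual norm is finite, which makes `‖b_p‖_*` positive.
-/

section DualNorm

variable {E : Type*} [AddCommGroup E] [Module ℝ E]

/-- The dual norm `sup {φ u | q u ≤ 1}` of a functional with respect to a seminorm `q`; as a real
`sSup`, it has the junk value `0` when the supremum is infinite. -/
noncomputable def dualNorm (q : Seminorm ℝ E) (φ : Module.Dual ℝ E) : ℝ :=
  sSup (φ '' {u | q u ≤ 1})

lemma exists_forall_dual_le_mul_norm [FiniteDimensional ℝ E] {q : Seminorm ℝ E}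
    (hq : ∀ u, q u = 0 → u = 0) (φ : Module.Dual ℝ E) :
    ∃ C, 0 ≤ C ∧ ∀ u, φ u ≤ C * q u := by
  let : Norm E := ⟨q⟩
  have core : NormedSpace.Core ℝ E :=
    { norm_nonneg := apply_nonneg q
      norm_smul := map_smul_eq_mul q
      norm_triangle := map_add_le_add q
      norm_eq_zero_iff := fun u => ⟨hq u, fun hu => hu ▸ map_zero q⟩ }
  let : NormedAddCommGroup E := .ofCore core
  let : NormedSpace ℝ E := .ofCore core
  exact ⟨‖φ.toContinuousLinearMap‖, norm_nonneg _, fun u =>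
    (le_abs_self _).trans (φ.toContinuousLinearMap.le_opNorm u)⟩

lemma bddAbove_dual_image_unitBall [FiniteDimensional ℝ E] {q : Seminorm ℝ E}
    (hq : ∀ u, q u = 0 → u = 0) (φ : Module.Dual ℝ E) : BddAbove (φ '' {u | q u ≤ 1}) := by
  obtain ⟨C, hC, hφ⟩ := exists_forall_dual_le_mul_norm hq φ
  refine ⟨C, ?_⟩
  rintro _ ⟨u, hu, rfl⟩
  exact (hφ u).trans (mul_le_of_le_one_right hC hu)

lemma dualNorm_pos_of_bddAbove {q : Seminorm ℝ E} {φ : Module.Dual ℝ E}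
    (hbdd : BddAbove (φ '' {u | q u ≤ 1})) (hφ : φ ≠ 0) : 0 < dualNorm q φ := by
  obtain ⟨v, hv⟩ : ∃ v, φ v = 1 := LinearMap.surjective hφ 1
  have hqv : 0 < q v + 1 := add_pos_of_nonneg_of_pos (apply_nonneg q v) one_pos
  have hball : q ((q v + 1)⁻¹ • v) ≤ 1 := by
    rw [map_smul_eq_mul, Real.norm_of_nonneg (inv_nonneg.2 hqv.le), inv_mul_le_one₀ hqv]
    exact le_add_of_nonneg_right zero_le_one
  calc
    0 < (q v + 1)⁻¹ := inv_pos.2 hqv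
    _ = φ ((q v + 1)⁻¹ • v) := by rw [map_smul, hv, smul_eq_mul, mul_one]
    _ ≤ dualNorm q φ := le_csSup hbdd ⟨_, hball, rfl⟩

lemma dualNorm_pos [FiniteDimensional ℝ E] {q : Seminorm ℝ E} (hq : ∀ u, q u = 0 → u = 0)
    {φ : Module.Dual ℝ E} (hφ : φ ≠ 0) : 0 < dualNorm q φ :=
  dualNorm_pos_of_bddAbove (bddAbove_dual_image_unitBall hq φ) hφ

end DualNorm

section Feasibility

variable {ι κ : Type*} [Fintype ι] {ε θ : ℝ} {ν w : κ → ℝ} {m : ι → κ → ℝ}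

/-- Feasibility of the exact reformulation at one decision. Here `m i p` is the margin
`b_p^⊤ξ_i + d_p - a_p^⊤x` of safety constraint `p` in scenario `i`, and `ν p` stands for
`‖b_p‖_*`, so that `m i p / ν p` is `f_{i,p}(x)`. -/
def ExactFeasible (ε θ : ℝ) (ν : κ → ℝ) (m : ι → κ → ℝ) : Prop :=
  ∃ (s : ℝ) (r : ι → ℝ), 0 ≤ s ∧ (∀ i, 0 ≤ r i) ∧
    θ * Fintype.card ι ≤ ε * Fintype.card ι * s - ∑ i, r i ∧
    ∀ i p, s - r i ≤ max (m i p / ν p) 0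

/-- Feasibility of the worst-case CVaR approximation with weights `w` at one decision, for margins
`m` and dual norms `ν` as in `ExactFeasible`. -/
def WCVaRFeasible (ε θ : ℝ) (ν w : κ → ℝ) (m : ι → κ → ℝ) : Prop :=
  ∃ (α : ι → ℝ) (β τ : ℝ), (∀ i, 0 ≤ α i) ∧
    τ + 1 / ε * (θ * β + 1 / Fintype.card ι * ∑ i, α i) ≤ 0 ∧
    (∀ i p, w p * -m i p - τ ≤ α i) ∧ ∀ p, w p * ν p ≤ β

lemma WCVaRFeasible.smul {c : ℝ} (hc : 0 ≤ c) (h : WCVaRFeasible ε θ ν w m) :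
    WCVaRFeasible ε θ ν (c • w) m := by
  obtain ⟨α, β, τ, hα, hrisk, hloss, hβ⟩ := h
  refine ⟨c • α, c * β, c * τ, fun i => mul_nonneg hc (hα i), ?_, fun i p => ?_, fun p => ?_⟩
  · calc
      c * τ + 1 / ε * (θ * (c * β) + 1 / Fintype.card ι * ∑ i, c * α i)
          = c * (τ + 1 / ε * (θ * β + 1 / Fintype.card ι * ∑ i, α i)) := by
        rw [← Finset.mul_sum]; ring
      _ ≤ 0 := mul_nonpos_of_nonneg_of_nonpos hc hrisk
  · calc
      c * w p * -m i p - c * τ = c * (w p * -m i p - τ) := by ring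
      _ ≤ c * α i := mul_le_mul_of_nonneg_left (hloss i p) hc
  · calc
      c * w p * ν p = c * (w p * ν p) := mul_assoc ..
      _ ≤ c * β := mul_le_mul_of_nonneg_left (hβ p) hc

lemma WCVaRFeasible.exactFeasible [Nonempty ι] [Nonempty κ] (hε : 0 < ε) (hθ : 0 ≤ θ)
    (hν : ∀ p, ν p ≠ 0) (h : WCVaRFeasible ε θ ν ν⁻¹ m) : ExactFeasible ε θ ν m := by
  obtain ⟨α, β, τ, hα, hrisk, hloss, hβ⟩ := h
  have : (0 : ℝ) < Fintype.card ι := Nat.cast_pos.2 Fintype.card_pos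
  have one_le_β : 1 ≤ β := by
    obtain ⟨p⟩ := ‹Nonempty κ›
    simpa only [Pi.inv_apply, inv_mul_cancel₀ (hν p)] using hβ p
  have hbudget : θ * β + 1 / Fintype.card ι * ∑ i, α i ≤ ε * -τ := by
    rw [← div_le_iff₀' hε, div_eq_inv_mul, ← one_div]
    linarith
  have hα_sum : 0 ≤ ∑ i, α i := Finset.sum_nonneg fun i _ => hα i
  have hτ : 0 ≤ -τ := nonneg_of_mul_nonneg_right (hbudget.trans' (by positivity)) hε
  refine ⟨-τ, α, hτ, hα, ?_, fun i p => le_max_of_le_left ?_⟩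
  · have hbudget_one : θ + 1 / Fintype.card ι * ∑ i, α i ≤ ε * -τ := by
      linarith [le_mul_of_one_le_right hθ one_le_β]
    calc
      θ * Fintype.card ι
          = (θ + 1 / Fintype.card ι * ∑ i, α i) * Fintype.card ι - ∑ i, α i := by
        field_simp; ring
      _ ≤ ε * -τ * Fintype.card ι - ∑ i, α i := by gcongr
      _ = ε * Fintype.card ι * -τ - ∑ i, α i := by ring
  · have hloss_ip : -(m i p / ν p) - τ ≤ α i := by
      simpa only [Pi.inv_apply, mul_neg, ← div_eq_inv_mul] using hloss i p
    linarith

theorem stmt_14_general [Nonempty ι] [Fintype κ] [Nonempty κ] (hε : 0 < ε) (hθ : 0 ≤ θ)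
    (hν : ∀ p, 0 < ν p) {D : Type*} (X : Set D) (m : D → ι → κ → ℝ) :
    {x ∈ X | WCVaRFeasible ε θ ν (fun p => (ν p)⁻¹ / ∑ l, (ν l)⁻¹) (m x)} ⊆
      {x ∈ X | ExactFeasible ε θ ν (m x)} := by
  rintro x ⟨hx, hw⟩
  have hsum : 0 < ∑ l, (ν l)⁻¹ :=
    Finset.sum_pos (fun l _ => inv_pos.2 (hν l)) Finset.univ_nonempty
  have hweights : (∑ l, (ν l)⁻¹) • (fun p => (ν p)⁻¹ / ∑ l, (ν l)⁻¹) = ν⁻¹ :=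
    funext fun _ => mul_div_cancel₀ _ hsum.ne'
  have hinv := hweights ▸ hw.smul hsum.le
  exact ⟨hx, hinv.exactFeasible hε hθ fun p => (hν p).ne'⟩

end Feasibility

theorem stmt_14
    (N K L P : ℕ) (hN : 0 < N) (hK : 0 < K) (hL : 0 < L) (hP : 0 < P)
    (nrm : (Fin K → ℝ) → ℝ)
    (nrm_eq_zero : ∀ u : Fin K → ℝ, nrm u = 0 ↔ u = 0)
    (nrm_smul : ∀ (c : ℝ) (u : Fin K → ℝ), nrm (c • u) = |c| * nrm u)
    (nrm_triangle : ∀ u w : Fin K → ℝ, nrm (u + w) ≤ nrm u + nrm w)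
    (dstar : (Fin K → ℝ) → ℝ)
    (hdstar : ∀ v : Fin K → ℝ,
      dstar v = sSup ((fun u : Fin K → ℝ => ∑ j, v j * u j) '' {u | nrm u ≤ 1}))
    (ξ : Fin N → Fin K → ℝ)
    (a : Fin P → Fin L → ℝ) (b : Fin P → Fin K → ℝ) (hb : ∀ p, b p ≠ 0)
    (d : Fin P → ℝ)
    (ε θ : ℝ) (hε0 : 0 < ε) (hε1 : ε < 1) (hθ : 0 < θ)
    (k : ℕ) (hk : k = ⌊ε * (N : ℝ)⌋₊) (hkN : k < N)
    (X : Set (Fin L → ℝ))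
    (f : Fin N → Fin P → (Fin L → ℝ) → ℝ)
    (hf : ∀ i p x, f i p x =
      ((∑ j, b p j * ξ i j) + d p - ∑ j, a p j * x j) / dstar (b p))
    (XExact : Set (Fin L → ℝ))
    (hXExact : XExact = {x | x ∈ X ∧ ∃ s : ℝ, ∃ r : Fin N → ℝ,
      0 ≤ s ∧ (∀ i, 0 ≤ r i) ∧
      ε * (N : ℝ) * s - ∑ i, r i ≥ θ * (N : ℝ) ∧
      ∀ i p, max (f i p x) 0 ≥ s - r i})
    (XWCVaR : (Fin P → ℝ) → Set (Fin L → ℝ))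
    (hXWCVaR : ∀ w : Fin P → ℝ, XWCVaR w = {x | x ∈ X ∧ ∃ α : Fin N → ℝ, ∃ β τ : ℝ,
      (∀ i, 0 ≤ α i) ∧
      τ + (1 / ε) * (θ * β + (1 / (N : ℝ)) * ∑ i, α i) ≤ 0 ∧
      (∀ i p, α i ≥ w p * ((∑ j, a p j * x j) - (∑ j, b p j * ξ i j) - d p) - τ) ∧
      ∀ p, β ≥ w p * dstar (b p)})
    :
    XWCVaR (fun p => (dstar (b p))⁻¹ / ∑ l, (dstar (b l))⁻¹) ⊆ XExact := by
  have hdual : ∀ p, 0 < dstar (b p) := fun p => by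
    rw [hdstar]
    exact dualNorm_pos (q := .of nrm nrm_triangle nrm_smul) (fun u => (nrm_eq_zero u).1)
      ((dotProductEquiv ℝ (Fin K)).map_ne_zero_iff.2 (hb p))
  have : Nonempty (Fin N) := ⟨⟨0, hN⟩⟩
  have : Nonempty (Fin P) := ⟨⟨0, hP⟩⟩
  have neg_margin (i p) (x : Fin L → ℝ) : (∑ j, a p j * x j) - (∑ j, b p j * ξ i j) - d p =
      -((∑ j, b p j * ξ i j) + d p - ∑ j, a p j * x j) := by ring
  simpa only [hXWCVaR, hXExact, hf, neg_margin, WCVaRFeasible, ExactFeasible, Fintype.card_fin]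
    using stmt_14_general hε0 hθ.le hdual X
      fun x i p => (∑ j, b p j * ξ i j) + d p - ∑ j, a p j * x j
end

section
/- For every κ ∈ [0,1]^N, the Linear Approximation is an inner approximation of the exact reformulation: X_LA(κ) ⊆ X_Exact. -/
theorem mul_le_sup_zero {R : Type*} [MulZeroOneClass R] [SemilatticeSup R] [PosMulMono R]
    [MulPosMono R] {c : R} (hc₀ : 0 ≤ c) (hc₁ : c ≤ 1) (t : R) : c * t ≤ t ⊔ 0 :=
  calc
    c * t ≤ c * (t ⊔ 0) := mul_le_mul_of_nonneg_left le_sup_left hc₀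
    _ ≤ t ⊔ 0 := mul_le_of_le_one_left le_sup_right hc₁

section

variable {ι π E : Type*} [Fintype ι]

/-- The feasible region, inside `X`, of a Wasserstein chance constraint whose safety margin at `x`
for sample `i` and safety condition `p` is `g i p x`. With `N` samples, risk level `ε` and
Wasserstein radius `θ`, the parameters are `α = εN` and `β = θN`; the exact reformulation and the
linear approximation differ only in the margin `g`. -/
def wassersteinFeasibleRegion (X : Set E) (α β : ℝ) (g : ι → π → E → ℝ) : Set E :=
  {x | x ∈ X ∧ ∃ s : ℝ, ∃ r : ι → ℝ,
    0 ≤ s ∧ (∀ i, 0 ≤ r i) ∧ β ≤ α * s - ∑ i, r i ∧ ∀ i p, s - r i ≤ g i p x}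

theorem monotone_wassersteinFeasibleRegion (X : Set E) (α β : ℝ) :
    Monotone (wassersteinFeasibleRegion (ι := ι) (π := π) X α β) := by
  rintro g h hgh x ⟨hxX, s, r, hs, hr, hbudget, hmargin⟩
  exact ⟨hxX, s, r, hs, hr, hbudget, fun i p => (hmargin i p).trans (hgh i p x)⟩

theorem stmt_15_general (X : Set E) (α β : ℝ) (f κ : ι → π → E → ℝ) (hκ : κ ∈ Set.Icc 0 1) :
    wassersteinFeasibleRegion X α β (κ * f) ⊆ wassersteinFeasibleRegion X α β (f ⊔ 0) :=
  monotone_wassersteinFeasibleRegion X α β (mul_le_sup_zero hκ.1 hκ.2 f)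

end

theorem stmt_15
    (N K L P : ℕ) (hN : 0 < N) (hK : 0 < K) (hL : 0 < L) (hP : 0 < P)
    (nrm : (Fin K → ℝ) → ℝ)
    (nrm_eq_zero : ∀ u : Fin K → ℝ, nrm u = 0 ↔ u = 0)
    (nrm_smul : ∀ (c : ℝ) (u : Fin K → ℝ), nrm (c • u) = |c| * nrm u)
    (nrm_triangle : ∀ u w : Fin K → ℝ, nrm (u + w) ≤ nrm u + nrm w)
    (dstar : (Fin K → ℝ) → ℝ)
    (hdstar : ∀ v : Fin K → ℝ,
      dstar v = sSup ((fun u : Fin K → ℝ => ∑ j, v j * u j) '' {u | nrm u ≤ 1}))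
    (ξ : Fin N → Fin K → ℝ)
    (a : Fin P → Fin L → ℝ) (b : Fin P → Fin K → ℝ) (hb : ∀ p, b p ≠ 0)
    (d : Fin P → ℝ)
    (ε θ : ℝ) (hε0 : 0 < ε) (hε1 : ε < 1) (hθ : 0 < θ)
    (k : ℕ) (hk : k = ⌊ε * (N : ℝ)⌋₊) (hkN : k < N)
    (X : Set (Fin L → ℝ))
    (f : Fin N → Fin P → (Fin L → ℝ) → ℝ)
    (hf : ∀ i p x, f i p x =
      ((∑ j, b p j * ξ i j) + d p - ∑ j, a p j * x j) / dstar (b p))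
    (XExact : Set (Fin L → ℝ))
    (hXExact : XExact = {x | x ∈ X ∧ ∃ s : ℝ, ∃ r : Fin N → ℝ,
      0 ≤ s ∧ (∀ i, 0 ≤ r i) ∧
      ε * (N : ℝ) * s - ∑ i, r i ≥ θ * (N : ℝ) ∧
      ∀ i p, max (f i p x) 0 ≥ s - r i})
    (XLA : (Fin N → ℝ) → Set (Fin L → ℝ))
    (hXLA : ∀ κ : Fin N → ℝ, XLA κ = {x | x ∈ X ∧ ∃ s : ℝ, ∃ r : Fin N → ℝ,
      0 ≤ s ∧ (∀ i, 0 ≤ r i) ∧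
      ε * (N : ℝ) * s - ∑ i, r i ≥ θ * (N : ℝ) ∧
      ∀ i p, κ i * f i p x ≥ s - r i})
    :
    ∀ κ : Fin N → ℝ, (∀ i, 0 ≤ κ i ∧ κ i ≤ 1) → XLA κ ⊆ XExact := by
  intro κ hκ
  rw [hXLA, hXExact]
  exact stmt_15_general X (ε * N) (θ * N) f (fun i _ _ => κ i)
    ⟨fun i _ _ => (hκ i).1, fun i _ _ => (hκ i).2⟩
end
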